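/- arXiv:0908.0778 — 6 statements merged into one kernel-verified Lean document; each statement's English description precedes it below -/
import Mathlib

section
/- Let V be a C⁵ perturbed quartic potential with ℓ ∈ {−1,1} equal to the sign of V⁽⁴⁾(0), and let x_n(v;t) = (−1)ⁿ Γ_{n,t}⁻¹ x(Γ_{n,t}v; nπ − ℓt) be the n-renormalized trajectories, where Γ_{n,t} = (8t/(3πn))^{1/2}. Then there exist K > 0, C > 0 and N ≥ 1 such that for every n ≥ N, every t ∈ (0, Kn] and every v ∈ [−1,1], the quantity x_n(v;t) is well defined and |x_n(v;t) − v sin(ℓt(v² − 1))| ≤ C (t/n + t²/n + t^{3/2}/n^{1/2}). -/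
open Real Filter Asymptotics Topology

/-- `V` is a C⁵ perturbed quartic potential `V(x) = x²/2 + ℓx⁴/4 + f(x)` with
`ℓ ∈ {-1,1}` (equal to the sign of `V⁽⁴⁾(0)`) and `|f⁽ⁱ⁾(x)| = O(|x|^{5-i})` as `x → 0`. -/
def PerturbedQuartic (V f : ℝ → ℝ) (l : ℝ) : Prop :=
  (l = 1 ∨ l = -1) ∧ ContDiff ℝ 5 f ∧
  (∀ x : ℝ, V x = x ^ 2 / 2 + l * x ^ 4 / 4 + f x) ∧
  (∀ i : ℕ, i ≤ 5 → (iteratedDeriv i f) =O[𝓝 0] fun x : ℝ => |x| ^ (5 - i))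

/-- `x v` is the solution of the Euler--Lagrange equation `ẍ = -V'(x)` with
initial conditions `x(v;0) = 0`, `ẋ(v;0) = v`, for every `|v| ≤ v₀`. -/
def SolutionFamily (V : ℝ → ℝ) (x : ℝ → ℝ → ℝ) (v₀ : ℝ) : Prop :=
  ∀ v : ℝ, |v| ≤ v₀ → ContDiff ℝ 2 (x v) ∧ x v 0 = 0 ∧ deriv (x v) 0 = v ∧
    ∀ t : ℝ, deriv (deriv (x v)) t = -(deriv V (x v t))

/-- local bounds on f and its derivative -/
lemma pq_local_bounds (f : ℝ → ℝ)
    (h : ∀ i : ℕ, i ≤ 5 → (iteratedDeriv i f) =O[𝓝 0] fun x : ℝ => |x| ^ (5 - i)) :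
    ∃ B > (0 : ℝ), ∃ d > (0 : ℝ), ∀ x : ℝ, |x| ≤ d →
      |f x| ≤ B * |x| ^ 5 ∧ |deriv f x| ≤ B * |x| ^ 4 := by
  have h0 := h 0 (by norm_num)
  have h1 := h 1 (by norm_num)
  rw [iteratedDeriv_zero] at h0
  rw [iteratedDeriv_one] at h1
  obtain ⟨B0, hB0, h0⟩ := h0.exists_pos
  obtain ⟨B1, hB1, h1⟩ := h1.exists_pos
  have h01 := h0.bound.and h1.bound
  obtain ⟨e, he, hb⟩ := Metric.eventually_nhds_iff.1 h01
  refine ⟨B0 + B1, by positivity, e / 2, by positivity, fun x hx => ?_⟩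
  have := @hb x (by rw [Real.dist_eq, sub_zero]; linarith)
  simp only [Real.norm_eq_abs, abs_pow, abs_abs] at this
  obtain ⟨a, b⟩ := this
  norm_num at a b
  have p5 : 0 ≤ |x| ^ 5 := by positivity
  have p4 : 0 ≤ |x| ^ 4 := by positivity
  constructor
  · nlinarith
  · nlinarith

/-- bound of the remainders -/
lemma pq_rem_bounds (l a x y g F B : ℝ) (hl : |l| = 1) (ha : |a| ≤ 1) (hB : 0 < B)
    (hx : |x| ≤ 2 * |a|) (hy : |y| ≤ 2 * |a|) (hg : |g| ≤ B * |x| ^ 4)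
    (hF : |F| ≤ B * |x| ^ 5) :
    |-g + l / 32 * (9 * y ^ 2 + 15 * x ^ 2) * (l * x ^ 3 + g)
      + 3 * l / 8 * (l * x ^ 4 / 2 + 2 * F) * x
      + 3 * l / 8 * a ^ 2 * (l / 32) * (9 * y ^ 2 * x + 5 * x ^ 3)| ≤ 200 * (1 + B) * |a| ^ 4 ∧
    |-(l / 32 * 18 * x * y * (l * x ^ 3 + g))
      - 3 * l / 8 * (l * x ^ 4 / 2 + 2 * F) * y
      + 3 * l / 8 * a ^ 2 * (l / 32) * (3 * y ^ 3 + 15 * x ^ 2 * y)| ≤ 200 * (1 + B) * |a| ^ 4 := by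
  set A := |a| with hA
  have hA0 : 0 ≤ A := abs_nonneg a
  have hX : |x| ≤ 2 * A := hx
  have hg' : |g| ≤ B * (2 * A) ^ 4 := hg.trans (by gcongr)
  have hF' : |F| ≤ B * (2 * A) ^ 5 := hF.trans (by gcongr)
  have e54 : A ^ 5 ≤ A ^ 4 := pow_le_pow_of_le_one hA0 ha (by norm_num)
  have e64 : A ^ 6 ≤ A ^ 4 := pow_le_pow_of_le_one hA0 ha (by norm_num)
  have b5 : B * A ^ 5 ≤ B * A ^ 4 := by gcongr
  have b6 : B * A ^ 6 ≤ B * A ^ 4 := by gcongr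
  have q4 : 0 ≤ A ^ 4 := by positivity
  have bq : 0 ≤ B * A ^ 4 := by positivity
  have hlx : |l * x ^ 3 + g| ≤ (2 * A) ^ 3 + B * (2 * A) ^ 4 := by
    refine (abs_add_le _ _).trans ?_
    rw [abs_mul, hl, one_mul, abs_pow]
    gcongr
  have hlF : |l * x ^ 4 / 2 + 2 * F| ≤ (2 * A) ^ 4 / 2 + 2 * (B * (2 * A) ^ 5) := by
    refine (abs_add_le _ _).trans ?_
    rw [abs_div, abs_mul, abs_mul, hl, one_mul, abs_pow, abs_two]
    gcongr
  have haa : |a ^ 2| = A ^ 2 := abs_pow a 2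
  have hl32 : |l / 32| = 1 / 32 := by rw [abs_div, hl]; norm_num
  have hl8 : |3 * l / 8| = 3 / 8 := by rw [abs_div, abs_mul, hl]; norm_num
  constructor
  · have t1 : |l / 32 * (9 * y ^ 2 + 15 * x ^ 2) * (l * x ^ 3 + g)|
        ≤ 1 / 32 * (9 * (2 * A) ^ 2 + 15 * (2 * A) ^ 2) * ((2 * A) ^ 3 + B * (2 * A) ^ 4) := by
      rw [abs_mul, abs_mul, hl32]
      gcongr
      refine (abs_add_le _ _).trans ?_
      rw [abs_mul, abs_mul, abs_pow, abs_pow, abs_of_pos (by norm_num : (0:ℝ) < 9),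
        abs_of_pos (by norm_num : (0:ℝ) < 15)]
      gcongr
    have t2 : |3 * l / 8 * (l * x ^ 4 / 2 + 2 * F) * x|
        ≤ 3 / 8 * ((2 * A) ^ 4 / 2 + 2 * (B * (2 * A) ^ 5)) * (2 * A) := by
      rw [abs_mul, abs_mul, hl8]
      gcongr
    have t3 : |3 * l / 8 * a ^ 2 * (l / 32) * (9 * y ^ 2 * x + 5 * x ^ 3)|
        ≤ 3 / 8 * A ^ 2 * (1 / 32) * (9 * (2 * A) ^ 2 * (2 * A) + 5 * (2 * A) ^ 3) := by
      rw [abs_mul, abs_mul, abs_mul, hl8, hl32, haa]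
      gcongr
      refine (abs_add_le _ _).trans ?_
      rw [abs_mul, abs_mul, abs_mul, abs_pow, abs_pow, abs_of_pos (by norm_num : (0:ℝ) < 9),
        abs_of_pos (by norm_num : (0:ℝ) < 5)]
      gcongr
    refine (abs_add_le _ _).trans ?_
    refine (add_le_add_left (abs_add_le _ _) _).trans ?_
    refine (add_le_add_left (add_le_add_left (abs_add_le _ _) _) _).trans ?_
    rw [abs_neg]
    nlinarith
  · have t1 : |l / 32 * 18 * x * y * (l * x ^ 3 + g)|
        ≤ 1 / 32 * 18 * (2 * A) * (2 * A) * ((2 * A) ^ 3 + B * (2 * A) ^ 4) := by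
      rw [abs_mul, abs_mul, abs_mul, abs_mul, hl32, abs_of_pos (by norm_num : (0:ℝ) < 18)]
      gcongr
    have t2 : |3 * l / 8 * (l * x ^ 4 / 2 + 2 * F) * y|
        ≤ 3 / 8 * ((2 * A) ^ 4 / 2 + 2 * (B * (2 * A) ^ 5)) * (2 * A) := by
      rw [abs_mul, abs_mul, hl8]
      gcongr
    have t3 : |3 * l / 8 * a ^ 2 * (l / 32) * (3 * y ^ 3 + 15 * x ^ 2 * y)|
        ≤ 3 / 8 * A ^ 2 * (1 / 32) * (3 * (2 * A) ^ 3 + 15 * (2 * A) ^ 2 * (2 * A)) := by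
      rw [abs_mul, abs_mul, abs_mul, hl8, hl32, haa]
      gcongr
      refine (abs_add_le _ _).trans ?_
      rw [abs_mul, abs_mul, abs_mul, abs_pow, abs_pow, abs_of_pos (by norm_num : (0:ℝ) < 3),
        abs_of_pos (by norm_num : (0:ℝ) < 15)]
      gcongr
    refine (abs_add_le _ _).trans ?_
    refine (add_le_add_left (abs_sub _ _) _).trans ?_
    rw [abs_neg]
    nlinarith

set_option maxHeartbeats 2000000 in
/-- the main estimate for a single trajectory -/
lemma pq_key (f : ℝ → ℝ) (l : ℝ) (hl : l = 1 ∨ l = -1) (hf : Differentiable ℝ f)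
    (B d : ℝ) (hB : 0 < B) (hd : 0 < d) (hd1 : d ≤ 1) (hdB : d ^ 2 / 4 + B * d ^ 3 ≤ 1 / 4)
    (hb : ∀ x : ℝ, |x| ≤ d → |f x| ≤ B * |x| ^ 5 ∧ |deriv f x| ≤ B * |x| ^ 4)
    (a : ℝ) (had : |a| ≤ d / 2) (x y : ℝ → ℝ)
    (hx : ∀ t, HasDerivAt x (y t) t)
    (hy : ∀ t, HasDerivAt y (-(x t + l * x t ^ 3 + deriv f (x t))) t)
    (hx0 : x 0 = 0) (hy0 : y 0 = a) (T : ℝ) :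
    |x T - a * Real.sin ((1 + 3 * l / 8 * a ^ 2) * T)|
      ≤ 800 * (1 + B) * (|a| ^ 3 + |a| ^ 4 * |T|) := by
  have hl2 : l ^ 2 = 1 := by rcases hl with h | h <;> rw [h] <;> norm_num
  have hlabs : |l| = 1 := by rcases hl with h | h <;> rw [h] <;> norm_num
  have hf0 : f 0 = 0 := by
    have := (hb 0 (by simpa using hd.le)).1
    simpa using this
  -- energy
  have hE : ∀ t, x t ^ 2 + y t ^ 2 + l * x t ^ 4 / 2 + 2 * f (x t) = a ^ 2 := by
    have hder : ∀ t, HasDerivAt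
        (fun t => x t ^ 2 + y t ^ 2 + l * x t ^ 4 / 2 + 2 * f (x t)) 0 t := by
      intro t
      have h1 := ((((hx t).pow 2).add ((hy t).pow 2)).add
        ((((hx t).pow 4).const_mul l).div_const 2)).add
        ((((hf (x t)).hasDerivAt).comp t (hx t)).const_mul 2)
      refine h1.congr_deriv ?_
      push_cast
      ring
    intro t
    have := is_const_of_deriv_eq_zero (fun t => (hder t).differentiableAt)
      (fun t => (hder t).deriv) t 0
    rw [this, hx0, hy0, hf0]
    ring
  -- energy bound
  have hpot : ∀ t, |x t| ≤ d → x t ^ 2 / 2 + y t ^ 2 ≤ a ^ 2 := by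
    intro t ht
    have h1 := (hb _ ht).1
    have h2 := hE t
    have h3 : |l * x t ^ 4 / 2 + 2 * f (x t)| ≤ |x t| ^ 4 / 2 + 2 * (B * |x t| ^ 5) := by
      refine (abs_add_le _ _).trans ?_
      rw [abs_div, abs_mul, abs_mul, hlabs, one_mul, abs_pow, abs_two]
      gcongr
    have h4 : |x t| ^ 2 / 4 + B * |x t| ^ 3 ≤ 1 / 4 := by
      refine le_trans ?_ hdB
      gcongr
    have h5 : |x t| ^ 4 / 2 + 2 * (B * |x t| ^ 5) ≤ x t ^ 2 / 2 := by
      have : |x t| ^ 4 / 2 + 2 * (B * |x t| ^ 5)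
        = 2 * (|x t| ^ 2 / 4 + B * |x t| ^ 3) * |x t| ^ 2 := by ring
      rw [this, ← sq_abs (x t)]
      have : 0 ≤ |x t| ^ 2 := by positivity
      nlinarith
    have h6 := (abs_le.1 h3).1
    linarith
  have ha2 : a ^ 2 ≤ (d / 2) ^ 2 := by
    rw [← sq_abs a]; gcongr
  have hxc : Continuous x := continuous_iff_continuousAt.2 fun t => (hx t).continuousAt
  have htrap : ∀ t, |x t| ≤ d := by
    intro t
    by_contra hcon
    push Not at hcon
    obtain ⟨s, hs⟩ := mem_range_of_exists_le_of_exists_ge hxc.abs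
      ⟨0, by rw [hx0]; simpa using hd.le⟩ ⟨t, hcon.le⟩
    simp only at hs
    have := hpot s hs.le
    have h2 : x s ^ 2 = d ^ 2 := by rw [← sq_abs, hs]
    nlinarith [sq_nonneg (y s)]
  have ha1 : |a| ≤ 1 := by linarith
  have hA0 : 0 ≤ |a| := abs_nonneg a
  have hxa : ∀ t, |x t| ≤ 2 * |a| := by
    intro t
    have := hpot t (htrap t)
    refine abs_le_of_sq_le_sq (a := x t) (b := 2 * |a|) ?_ (by positivity)
    nlinarith [sq_abs a, sq_nonneg (y t), sq_nonneg a]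
  have hya : ∀ t, |y t| ≤ 2 * |a| := by
    intro t
    have := hpot t (htrap t)
    refine abs_le_of_sq_le_sq (a := y t) (b := 2 * |a|) ?_ (by positivity)
    nlinarith [sq_abs a, sq_nonneg (x t), sq_nonneg a]
  set w : ℝ := 1 + 3 * l / 8 * a ^ 2 with hw
  set P : ℝ → ℝ := fun t => y t - l / 32 * (3 * y t ^ 3 + 15 * (x t ^ 2 * y t)) with hP
  set Q : ℝ → ℝ := fun t => x t + l / 32 * (9 * (y t ^ 2 * x t) + 5 * x t ^ 3) with hQ
  set M : ℝ := 200 * (1 + B) * |a| ^ 4 with hM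
  have hPd : ∀ t, ∃ R, |R| ≤ M ∧ HasDerivAt P (-w * Q t + R) t := by
    intro t
    refine ⟨_, (pq_rem_bounds l a (x t) (y t) (deriv f (x t)) (f (x t)) B hlabs ha1 hB
      (hxa t) (hya t) (hb _ (htrap t)).2 (hb _ (htrap t)).1).1, ?_⟩
    have h1 := (hy t).sub (((((hy t).pow 3).const_mul 3).add
      ((((hx t).pow 2).mul (hy t)).const_mul 15)).const_mul (l / 32))
    refine h1.congr_deriv ?_
    have e := hE t
    simp only [hQ, hw, Pi.pow_apply]
    push_cast
    have e' : l * x t ^ 4 / 2 + 2 * f (x t) = a ^ 2 - x t ^ 2 - y t ^ 2 := by linarith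
    rw [e']
    ring
  have hQd : ∀ t, ∃ R, |R| ≤ M ∧ HasDerivAt Q (w * P t + R) t := by
    intro t
    refine ⟨_, (pq_rem_bounds l a (x t) (y t) (deriv f (x t)) (f (x t)) B hlabs ha1 hB
      (hxa t) (hya t) (hb _ (htrap t)).2 (hb _ (htrap t)).1).2, ?_⟩
    have h1 := (hx t).add ((((((hy t).pow 2).mul (hx t)).const_mul 9).add
      (((hx t).pow 3).const_mul 5)).const_mul (l / 32))
    refine h1.congr_deriv ?_
    have e := hE t
    simp only [hP, hw, Pi.pow_apply]
    push_cast
    have e' : l * x t ^ 4 / 2 + 2 * f (x t) = a ^ 2 - x t ^ 2 - y t ^ 2 := by linarith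
    rw [e']
    ring
  have hlin : ∀ t, HasDerivAt (fun s : ℝ => w * s) w t := by
    intro t
    simpa using (hasDerivAt_id t).const_mul w
  have hM0 : 0 ≤ M := by positivity
  have hrot : ∀ θ R1 R2 : ℝ, |R1| ≤ M → |R2| ≤ M →
      |Real.cos θ * R1 + Real.sin θ * R2| ≤ 2 * M ∧
      |Real.cos θ * R2 - Real.sin θ * R1| ≤ 2 * M := by
    intro θ R1 R2 h1 h2
    have c : ∀ R, |R| ≤ M → |Real.cos θ * R| ≤ M := fun R h => by
      rw [abs_mul]; nlinarith [Real.abs_cos_le_one θ, abs_nonneg R, abs_nonneg (Real.cos θ)]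
    have s : ∀ R, |R| ≤ M → |Real.sin θ * R| ≤ M := fun R h => by
      rw [abs_mul]; nlinarith [Real.abs_sin_le_one θ, abs_nonneg R, abs_nonneg (Real.sin θ)]
    exact ⟨(abs_add_le _ _).trans (by linarith [c _ h1, s _ h2]),
      (abs_sub _ _).trans (by linarith [c _ h2, s _ h1])⟩
  set U : ℝ → ℝ := fun t => Real.cos (w * t) * P t + Real.sin (w * t) * Q t with hU
  set S : ℝ → ℝ := fun t => Real.cos (w * t) * Q t - Real.sin (w * t) * P t with hS
  choose R1 hR1 hP' using hPd
  choose R2 hR2 hQ' using hQd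
  have hUd : ∀ t, HasDerivAt U (Real.cos (w * t) * R1 t + Real.sin (w * t) * R2 t) t := by
    intro t
    have h1 := ((hlin t).cos.mul (hP' t)).add ((hlin t).sin.mul (hQ' t))
    refine h1.congr_deriv ?_
    ring
  have hSd : ∀ t, HasDerivAt S (Real.cos (w * t) * R2 t - Real.sin (w * t) * R1 t) t := by
    intro t
    have h1 := ((hlin t).cos.mul (hQ' t)).sub ((hlin t).sin.mul (hP' t))
    refine h1.congr_deriv ?_
    ring
  have hUT : |U T - U 0| ≤ 2 * M * |T| := by
    have := convex_univ.norm_image_sub_le_of_norm_hasDerivWithin_le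
      (fun t _ => (hUd t).hasDerivWithinAt)
      (fun t _ => (hrot (w * t) _ _ (hR1 t) (hR2 t)).1) (Set.mem_univ 0) (Set.mem_univ T)
    simpa using this
  have hST : |S T - S 0| ≤ 2 * M * |T| := by
    have := convex_univ.norm_image_sub_le_of_norm_hasDerivWithin_le
      (fun t _ => (hSd t).hasDerivWithinAt)
      (fun t _ => (hrot (w * t) _ _ (hR1 t) (hR2 t)).2) (Set.mem_univ 0) (Set.mem_univ T)
    simpa using this
  have hU0 : U 0 = a - 3 * l / 32 * a ^ 3 := by
    simp only [hU, hP, hQ, hx0, hy0, mul_zero, Real.cos_zero, Real.sin_zero]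
    ring
  have hS0 : S 0 = 0 := by
    simp only [hS, hP, hQ, hx0, hy0, mul_zero, Real.cos_zero, Real.sin_zero]
    ring
  have hsc := Real.sin_sq_add_cos_sq (w * T)
  have hQT : Q T = Real.cos (w * T) * S T + Real.sin (w * T) * U T := by
    simp only [hS, hU]
    linear_combination (-Q T) * hsc
  have hdec : x T - a * Real.sin (w * T) =
      -(l / 32 * (9 * (y T ^ 2 * x T) + 5 * x T ^ 3)) - Real.sin (w * T) * (3 * l / 32 * a ^ 3)
      + (Real.cos (w * T) * (S T - S 0) + Real.sin (w * T) * (U T - U 0)) := by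
    have h1 : x T = Q T - l / 32 * (9 * (y T ^ 2 * x T) + 5 * x T ^ 3) := by
      simp only [hQ]; ring
    rw [hS0, hU0]
    linear_combination h1 + hQT
  have hcos := Real.abs_cos_le_one (w * T)
  have hsin := Real.abs_sin_le_one (w * T)
  have t1 : |l / 32 * (9 * (y T ^ 2 * x T) + 5 * x T ^ 3)|
      ≤ 1 / 32 * (9 * ((2 * |a|) ^ 2 * (2 * |a|)) + 5 * (2 * |a|) ^ 3) := by
    rw [abs_mul, abs_div, hlabs, abs_of_pos (by norm_num : (0:ℝ) < 32)]
    gcongr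
    refine (abs_add_le _ _).trans ?_
    rw [abs_mul, abs_mul, abs_mul, abs_pow, abs_pow, abs_of_pos (by norm_num : (0:ℝ) < 9),
      abs_of_pos (by norm_num : (0:ℝ) < 5)]
    have := hxa T
    have := hya T
    gcongr
  have t2 : |Real.sin (w * T) * (3 * l / 32 * a ^ 3)| ≤ 1 * (3 / 32 * |a| ^ 3) := by
    rw [abs_mul, abs_mul, abs_div, abs_mul, hlabs, abs_pow,
      abs_of_pos (by norm_num : (0:ℝ) < 32), abs_of_pos (by norm_num : (0:ℝ) < 3), mul_one]
    gcongr
  have t3 : |Real.cos (w * T) * (S T - S 0)| ≤ 1 * (2 * M * |T|) := by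
    rw [abs_mul]; gcongr
  have t4 : |Real.sin (w * T) * (U T - U 0)| ≤ 1 * (2 * M * |T|) := by
    rw [abs_mul]; gcongr
  rw [hdec]
  refine (abs_add_le _ _).trans ?_
  have t5 := abs_sub (-(l / 32 * (9 * (y T ^ 2 * x T) + 5 * x T ^ 3)))
    (Real.sin (w * T) * (3 * l / 32 * a ^ 3))
  rw [abs_neg] at t5
  have t6 := abs_add_le (Real.cos (w * T) * (S T - S 0)) (Real.sin (w * T) * (U T - U 0))
  have p3 : 0 ≤ |a| ^ 3 := by positivity
  have p3B : 0 ≤ B * |a| ^ 3 := by positivity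
  have t7 : 4 * M * |T| = 800 * (1 + B) * (|a| ^ 4 * |T|) := by rw [hM]; ring
  have p4 : 0 ≤ |a| ^ 4 * |T| := by positivity
  nlinarith

set_option maxHeartbeats 2000000 in
/-- the `n`-renormalized trajectories
`x_n(v;t) = (-1)ⁿ Γ_{n,t}⁻¹ x(Γ_{n,t}v; nπ - ℓt)` converge to the asymptotic
trajectories `X_ℓ(v;t) = v sin(ℓt(v²-1))` with the stated rate. -/
theorem statement1 (V f : ℝ → ℝ) (l : ℝ) (hV : PerturbedQuartic V f l)
    (v₀ : ℝ) (hv₀ : 0 < v₀) (x : ℝ → ℝ → ℝ) (hx : SolutionFamily V x v₀) :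
    ∃ K > (0 : ℝ), ∃ C > (0 : ℝ), ∃ N : ℕ, 1 ≤ N ∧
      ∀ n : ℕ, N ≤ n → ∀ t ∈ Set.Ioc (0 : ℝ) (K * (n : ℝ)), ∀ v ∈ Set.Icc (-1 : ℝ) 1,
        -- `x_n(v;t)` is well defined:
        |Real.sqrt (8 * t / (3 * Real.pi * (n : ℝ))) * v| ≤ v₀ ∧
        |(-1 : ℝ) ^ n * (Real.sqrt (8 * t / (3 * Real.pi * (n : ℝ))))⁻¹ *
            x (Real.sqrt (8 * t / (3 * Real.pi * (n : ℝ))) * v) ((n : ℝ) * Real.pi - l * t) -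
          v * Real.sin (l * t * (v ^ 2 - 1))|
          ≤ C * (t / (n : ℝ) + t ^ 2 / (n : ℝ) + t ^ ((3 : ℝ) / 2) / Real.sqrt (n : ℝ)) := by
  obtain ⟨hl, hfC, hVf, hO⟩ := hV
  have hl2 : l ^ 2 = 1 := by rcases hl with h | h <;> rw [h] <;> norm_num
  have hlabs : |l| = 1 := by rcases hl with h | h <;> rw [h] <;> norm_num
  obtain ⟨B, hB, d0, hd0, hb⟩ := pq_local_bounds f hO
  have hf : Differentiable ℝ f := hfC.differentiable (by norm_num)
  set d : ℝ := min d0 (min (1 / 2) (1 / (4 * (1 + B)))) with hd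
  have hdpos : 0 < d := by positivity
  have hd12 : d ≤ 1 / 2 := (min_le_right _ _).trans (min_le_left _ _)
  have hdB' : B * d ≤ 1 / 4 := by
    have h1 : d ≤ 1 / (4 * (1 + B)) := (min_le_right _ _).trans (min_le_right _ _)
    rw [le_div_iff₀ (by positivity)] at h1
    nlinarith
  have hdB : d ^ 2 / 4 + B * d ^ 3 ≤ 1 / 4 := by
    have h1 : d ^ 2 ≤ 1 / 4 := by nlinarith
    have h2 : B * d ^ 3 = (B * d) * d ^ 2 := by ring
    rw [h2]
    nlinarith [sq_nonneg d, mul_pos hB hdpos]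
  have hVd : ∀ z, deriv V z = z + l * z ^ 3 + deriv f z := by
    intro z
    have hVfun : V = fun x => x ^ 2 / 2 + l * x ^ 4 / 4 + f x := funext hVf
    rw [hVfun]
    have h1 := ((((hasDerivAt_id z).pow 2).div_const 2).add
      ((((hasDerivAt_id z).pow 4).const_mul l).div_const 4)).add (hf z).hasDerivAt
    refine (h1.congr_deriv ?_).deriv
    simp only [id]
    push_cast
    ring
  have key : ∀ a, |a| ≤ d / 2 → |a| ≤ v₀ → ∀ T,
      |x a T - a * Real.sin ((1 + 3 * l / 8 * a ^ 2) * T)|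
        ≤ 800 * (1 + B) * (|a| ^ 3 + |a| ^ 4 * |T|) := by
    intro a ha hav T
    obtain ⟨hc, h0, h1, h2⟩ := hx a hav
    have hc1 : ContDiff ℝ 1 (deriv (x a)) := by
      have : ContDiff ℝ (1 + 1) (x a) := by norm_num; exact hc
      exact (contDiff_succ_iff_deriv.1 this).2.2
    refine pq_key f l hl hf B d hB hdpos (by linarith) hdB
      (fun z hz => hb z (hz.trans (min_le_left _ _))) a ha (x a) (deriv (x a))
      (fun t => ((hc.differentiable (by norm_num)) t).hasDerivAt) (fun t => ?_) h0 h1 T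
    have := ((hc1.differentiable (by norm_num)) t).hasDerivAt
    rwa [h2 t, hVd] at this
  set m : ℝ := min (d / 2) v₀ with hm
  have hmpos : 0 < m := by positivity
  set D : ℝ := 800 * (1 + B) with hD
  have hDpos : 0 < D := by positivity
  refine ⟨min 1 (m ^ 2), by positivity, 5 * D + 1, by positivity, 1, le_rfl, ?_⟩
  intro n hn t ht v hv
  obtain ⟨ht0, htK⟩ := ht
  have hn0 : (0 : ℝ) < n := by exact_mod_cast hn
  have htn : t / n ≤ min 1 (m ^ 2) := by rwa [div_le_iff₀ hn0]
  set G : ℝ := Real.sqrt (8 * t / (3 * Real.pi * (n : ℝ))) with hG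
  have hpi := Real.pi_gt_three
  have hpi4 := Real.pi_le_four
  have hGpos : 0 < G := Real.sqrt_pos.2 (by positivity)
  have hG2 : G ^ 2 = 8 * t / (3 * Real.pi * (n : ℝ)) := Real.sq_sqrt (by positivity)
  have hG2le : G ^ 2 ≤ t / n := by
    rw [hG2, div_le_div_iff₀ (by positivity) hn0]
    nlinarith [mul_pos ht0 hn0]
  have hGm : G ≤ m := by
    have : G ^ 2 ≤ m ^ 2 := hG2le.trans (htn.trans (min_le_right _ _))
    exact le_of_sq_le_sq this hmpos.le
  have hvabs : |v| ≤ 1 := abs_le.2 hv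
  have hGv : |G * v| ≤ G := by
    rw [abs_mul, abs_of_pos hGpos]; nlinarith
  refine ⟨hGv.trans (hGm.trans (min_le_right _ _)), ?_⟩
  have hk := key (G * v) (hGv.trans (hGm.trans (min_le_left _ _)))
    (hGv.trans (hGm.trans (min_le_right _ _))) (n * Real.pi - l * t)
  set T : ℝ := n * Real.pi - l * t with hT
  have htn1 : t ≤ n := by
    have := htn.trans (min_le_left _ _)
    rwa [div_le_one hn0] at this
  have hTabs : |T| ≤ 5 * n := by
    refine (abs_sub _ _).trans ?_
    rw [abs_mul, abs_mul, hlabs, abs_of_pos hn0, abs_of_pos Real.pi_pos, abs_of_pos ht0]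
    nlinarith
  set φ : ℝ := l * t * (v ^ 2 - 1) with hφ
  set ψ : ℝ := φ - 3 / 8 * G ^ 2 * v ^ 2 * t with hψ
  have hph : (1 + 3 * l / 8 * (G * v) ^ 2) * T = ψ + n * Real.pi := by
    have hGn : 3 / 8 * G ^ 2 * (n * Real.pi) = t := by
      rw [hG2]; field_simp
    have : (1 + 3 * l / 8 * (G * v) ^ 2) * T = n * Real.pi - l * t
        + l * v ^ 2 * (3 / 8 * G ^ 2 * (n * Real.pi)) - l ^ 2 * (3 / 8 * G ^ 2 * v ^ 2 * t) := by
      rw [hT]; ring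
    rw [this, hGn, hl2, hψ, hφ]
    ring
  rw [hph, Real.sin_add_nat_mul_pi] at hk
  have hsg : ((-1 : ℝ) ^ n) * (-1 : ℝ) ^ n = 1 := by
    rw [← mul_pow]; norm_num
  have hsgabs : |(-1 : ℝ) ^ n| = 1 := by rw [abs_pow]; norm_num
  have hdec : (-1 : ℝ) ^ n * G⁻¹ * x (G * v) T - v * Real.sin φ =
      (-1 : ℝ) ^ n * G⁻¹ * (x (G * v) T - G * v * ((-1) ^ n * Real.sin ψ))
        + v * (Real.sin ψ - Real.sin φ) := by
    have : (-1 : ℝ) ^ n * G⁻¹ * (G * v * ((-1) ^ n * Real.sin ψ)) = v * Real.sin ψ := by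
      calc _ = ((-1 : ℝ) ^ n * (-1 : ℝ) ^ n) * (G⁻¹ * G) * v * Real.sin ψ := by ring
        _ = _ := by rw [hsg, inv_mul_cancel₀ hGpos.ne']; ring
    rw [mul_sub ((-1 : ℝ) ^ n * G⁻¹), this]
    ring
  rw [hdec]
  have hA : |(-1 : ℝ) ^ n * G⁻¹ * (x (G * v) T - G * v * ((-1) ^ n * Real.sin ψ))|
      ≤ D * (G ^ 2 + 5 * (G ^ 3 * n)) := by
    rw [abs_mul, abs_mul, hsgabs, one_mul, abs_of_pos (inv_pos.2 hGpos), inv_mul_le_iff₀ hGpos]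
    refine hk.trans ?_
    have : G * (D * (G ^ 2 + 5 * (G ^ 3 * n))) = D * (G ^ 3 + G ^ 4 * (5 * n)) := by ring
    rw [this]
    gcongr
  have hBd : |v * (Real.sin ψ - Real.sin φ)| ≤ t ^ 2 / n := by
    have h1 : |Real.sin ψ - Real.sin φ| ≤ |ψ - φ| := by
      have := Real.abs_sin_sub_sin_le ψ φ
      exact this
    have h2 : |ψ - φ| ≤ t ^ 2 / n := by
      have e : ψ - φ = -(3 / 8 * G ^ 2 * v ^ 2 * t) := by rw [hψ]; ring
      rw [e, abs_neg, abs_of_nonneg (by positivity)]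
      have hv2 : v ^ 2 ≤ 1 := (sq_le_one_iff_abs_le_one v).2 hvabs
      calc 3 / 8 * G ^ 2 * v ^ 2 * t ≤ 1 * (t / n) * 1 * t := by
            gcongr; norm_num
        _ = _ := by ring
    rw [abs_mul]
    exact (mul_le_of_le_one_left (abs_nonneg _) hvabs).trans (h1.trans h2)
  have hG3 : G ^ 3 * n ≤ t ^ ((3 : ℝ) / 2) / Real.sqrt n := by
    have hr : t ^ ((3 : ℝ) / 2) = Real.sqrt t ^ 3 := by
      rw [Real.sqrt_eq_rpow, ← Real.rpow_natCast, ← Real.rpow_mul ht0.le]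
      norm_num
    have hs : 0 < Real.sqrt n := Real.sqrt_pos.2 hn0
    have hGr : G ≤ Real.sqrt t / Real.sqrt n := by
      rw [← Real.sqrt_div ht0.le]
      exact Real.le_sqrt_of_sq_le hG2le
    have hss : Real.sqrt n ^ 2 = n := Real.sq_sqrt hn0.le
    calc G ^ 3 * n ≤ (Real.sqrt t / Real.sqrt n) ^ 3 * n := by gcongr
      _ = (Real.sqrt t / Real.sqrt n) ^ 3 * Real.sqrt n ^ 2 := by rw [hss]
      _ = _ := by rw [hr]; field_simp
  have hpos1 : 0 ≤ t / n := by positivity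
  have hpos2 : 0 ≤ t ^ 2 / n := by positivity
  have hpos3 : 0 ≤ t ^ ((3 : ℝ) / 2) / Real.sqrt n := by positivity
  refine (abs_add_le _ _).trans ((add_le_add hA hBd).trans ?_)
  have q1 : D * G ^ 2 ≤ D * (t / n) := by gcongr
  have q2 : D * (G ^ 3 * n) ≤ D * (t ^ ((3 : ℝ) / 2) / Real.sqrt n) := by gcongr
  nlinarith [mul_nonneg hDpos.le hpos1, mul_nonneg hDpos.le hpos2]
end

section
/- Let V be a C⁵ perturbed quartic potential with ℓ ∈ {−1,1} equal to the sign of V⁽⁴⁾(0), and let x_n(v;t) = (−1)ⁿ Γ_{n,t}⁻¹ x(Γ_{n,t}v; nπ − ℓt), where Γ_{n,t} = (8t/(3πn))^{1/2}. Then there exists K > 0 such that for every 0 < ε < 1/3 there exist C > 0 and N ≥ 1 with: for all n ≥ N, the supremum over v ∈ [−1,1] and t ∈ (0, K n^{1/3−ε}] of |x_n(v;t) − v sin(ℓt(v² − 1))| is at most C n^{−3ε/2}. -/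
open Real Filter Asymptotics Topology

/-- Local bounds on the perturbation. -/
lemma pq_local (V f : ℝ → ℝ) (l : ℝ) (hV : PerturbedQuartic V f l) :
    ∃ M > (0:ℝ), ∃ d > (0:ℝ), d ≤ 1 / 2 ∧ M * d ≤ 1 / 8 ∧
      ∀ x : ℝ, |x| ≤ d → |f x| ≤ M * |x| ^ 5 ∧ |deriv f x| ≤ M * |x| ^ 4 := by
  obtain ⟨-, -, -, hO⟩ := hV
  have h0 := hO 0 (by norm_num)
  have h1 := hO 1 (by norm_num)
  rw [iteratedDeriv_zero] at h0
  rw [iteratedDeriv_one] at h1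
  obtain ⟨c0, hc0, h0⟩ := h0.exists_pos
  obtain ⟨c1, hc1, h1⟩ := h1.exists_pos
  have h := (h0.bound).and h1.bound
  rw [Metric.eventually_nhds_iff] at h
  obtain ⟨r, hr, h⟩ := h
  have hM : 0 < c0 + c1 := by positivity
  refine ⟨c0 + c1, hM, min (r / 2) (min (1 / 2) (1 / (8 * (c0 + c1)))), by positivity,
    (min_le_right _ _).trans (min_le_left _ _), ?_, ?_⟩
  · calc (c0 + c1) * min (r / 2) (min (1 / 2) (1 / (8 * (c0 + c1))))
        ≤ (c0 + c1) * (1 / (8 * (c0 + c1))) := by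
          gcongr
          exact (min_le_right _ _).trans (min_le_right _ _)
      _ = 1 / 8 := by field_simp
  · intro x hx
    have hxr : |x| < r := by
      have := hx.trans (min_le_left _ _)
      linarith
    have := h (y := x) (by simpa [Real.dist_eq] using hxr)
    simp only [Real.norm_eq_abs, abs_pow, abs_abs] at this
    norm_num at this
    have h5 : 0 ≤ |x| ^ 5 := by positivity
    have h4 : 0 ≤ |x| ^ 4 := by positivity
    constructor
    · nlinarith [this.1]
    · nlinarith [this.2]

lemma abs_mul_le' {a b A B : ℝ} (ha : |a| ≤ A) (hb : |b| ≤ B) : |a * b| ≤ A * B := by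
  rw [abs_mul]
  exact mul_le_mul ha hb (abs_nonneg _) ((abs_nonneg _).trans ha)

lemma lip_bound (F F' : ℝ → ℝ) (B : ℝ) (h : ∀ t, HasDerivAt F (F' t) t)
    (hB : ∀ t, |F' t| ≤ B) (T : ℝ) : |F T - F 0| ≤ B * |T| := by
  have := Convex.norm_image_sub_le_of_norm_hasDerivWithin_le (f := F) (f' := F') (s := Set.univ)
    (C := B) (x := 0) (y := T) (fun t _ => (h t).hasDerivWithinAt) (fun t _ => hB t) convex_univ
    (Set.mem_univ _) (Set.mem_univ _)
  simpa using this

/-- trapping and energy estimates -/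
lemma trap (V f : ℝ → ℝ) (l : ℝ) (hV : PerturbedQuartic V f l) (M d : ℝ) (hM : 0 < M)
    (hd : 0 < d) (hd2 : d ≤ 1 / 2) (hMd : M * d ≤ 1 / 8)
    (hb : ∀ x : ℝ, |x| ≤ d → |f x| ≤ M * |x| ^ 5 ∧ |deriv f x| ≤ M * |x| ^ 4)
    (A : ℝ) (hA : |A| ≤ d / 2) (x y : ℝ → ℝ) (hx : ∀ t, HasDerivAt x (y t) t)
    (hy : ∀ t, HasDerivAt y (-(x t + l * x t ^ 3 + deriv f (x t))) t)
    (hx0 : x 0 = 0) (hy0 : y 0 = A) (t : ℝ) :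
    |x t| ≤ d ∧ |x t| ≤ 2 * |A| ∧ |y t| ≤ 2 * |A| ∧
      |x t ^ 2 + y t ^ 2 - A ^ 2| ≤ (16 * (1 + 2 * M)) * |A| ^ 4 := by
  obtain ⟨hl, hf, hVf, hO⟩ := hV
  have hl1 : |l| = 1 := by rcases hl with h | h <;> simp [h]
  have hfd : Differentiable ℝ f := hf.differentiable (by norm_num)
  have hf0 : f 0 = 0 := by
    have := (hb 0 (by simpa using hd.le)).1
    simpa using this
  have hE : ∀ t, y t ^ 2 / 2 + (x t ^ 2 / 2 + l * x t ^ 4 / 4 + f (x t)) = A ^ 2 / 2 := by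
    intro t
    have hd : ∀ t, HasDerivAt
        (fun t => y t ^ 2 / 2 + (x t ^ 2 / 2 + l * x t ^ 4 / 4 + f (x t))) 0 t := by
      intro t
      have h1 := ((hy t).pow 2).div_const 2
      have h2 := ((hx t).pow 2).div_const 2
      have h3 := (((hx t).pow 4).const_mul l).div_const 4
      have h4 := (hfd (x t)).hasDerivAt.comp t (hx t)
      refine (h1.add ((h2.add h3).add h4)).congr_deriv ?_
      norm_num
      ring
    have := lip_bound _ _ 0 hd (by simp) t
    simp only [hx0, hy0, hf0] at this
    norm_num at this
    linarith
  have hlow : ∀ u : ℝ, |u| ≤ d → u ^ 2 / 4 ≤ u ^ 2 / 2 + l * u ^ 4 / 4 + f u := by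
    intro u hu
    have h1 := (abs_le.1 (hb u hu).1).1
    have h2 : |l * u ^ 4| = |u| ^ 4 := by rw [abs_mul, hl1, abs_pow]; ring
    have h3 := (abs_le.1 h2.le).1
    have hu0 := abs_nonneg u
    have h4 : M * |u| ≤ 1 / 8 := (mul_le_mul_of_nonneg_left hu hM.le).trans hMd
    have h5 : |u| ^ 2 ≤ 1 / 4 := by nlinarith
    have h6 : |u| ^ 4 ≤ |u| ^ 2 * (1 / 4) := by
      calc |u| ^ 4 = |u| ^ 2 * |u| ^ 2 := by ring
        _ ≤ _ := by gcongr
    have h7 : M * |u| ^ 5 ≤ 1 / 8 * |u| ^ 4 := by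
      calc M * |u| ^ 5 = (M * |u|) * |u| ^ 4 := by ring
        _ ≤ _ := by gcongr
    have h8 : u ^ 2 = |u| ^ 2 := (sq_abs u).symm
    rw [h8]
    have : 0 ≤ |u| ^ 2 := by positivity
    linarith
  have hcont : Continuous x := continuous_iff_continuousAt.2 fun t => (hx t).continuousAt
  have hAd : A ^ 2 ≤ d ^ 2 / 4 := by
    rw [← sq_abs A]; nlinarith [abs_nonneg A]
  have hxd : |x t| ≤ d := by
    by_contra hcon
    push Not at hcon
    have hc : ContinuousOn (fun s => |x s|) (Set.uIcc 0 t) := hcont.abs.continuousOn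
    have := intermediate_value_uIcc hc
    obtain ⟨s, -, hs⟩ := this (show d ∈ Set.uIcc (|x 0|) (|x t|) by
      rw [hx0, abs_zero, Set.uIcc_of_le (abs_nonneg _)]
      exact ⟨hd.le, hcon.le⟩)
    have hs' : |x s| = d := hs
    have h1 := hlow (x s) hs'.le
    have h2 := hE s
    have h3 : x s ^ 2 = d ^ 2 := by rw [← sq_abs, hs']
    nlinarith [sq_nonneg (y s), mul_pos hd hd]
  have h1 := hlow _ hxd
  have h2 := hE t
  have hx2 : |x t| ≤ 2 * |A| := by
    apply abs_le_of_sq_le_sq' _ (by positivity) |> abs_le.2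
    rw [mul_pow, sq_abs]
    nlinarith [sq_nonneg (y t), sq_nonneg A]
  have hy2 : |y t| ≤ 2 * |A| := by
    apply abs_le_of_sq_le_sq' _ (by positivity) |> abs_le.2
    rw [mul_pow, sq_abs]
    nlinarith [sq_nonneg (x t), sq_nonneg A]
  refine ⟨hxd, hx2, hy2, ?_⟩
  have h3 : x t ^ 2 + y t ^ 2 - A ^ 2 = -(l * x t ^ 4 / 2 + 2 * f (x t)) := by linarith
  have h4 : |l * x t ^ 4| = |x t| ^ 4 := by rw [abs_mul, hl1, abs_pow]; ring
  have h5 : |x t| ^ 4 ≤ (2 * |A|) ^ 4 := by gcongr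
  have h6 := (hb _ hxd).1
  have h7 : M * |x t| ^ 5 ≤ M * |x t| ^ 4 := by
    have : |x t| ^ 5 ≤ |x t| ^ 4 := by
      apply pow_le_pow_of_le_one (abs_nonneg _) (by linarith) (by norm_num)
    gcongr
  have h8 : M * |x t| ^ 4 ≤ M * (2 * |A|) ^ 4 := by gcongr
  rw [h3, abs_neg]
  have h9 := abs_le.1 h4.le
  have h10 := abs_le.1 h6
  have h11 : 0 ≤ |A| ^ 4 := by positivity
  have e16 : (2 * |A|) ^ 4 = 16 * |A| ^ 4 := by ring
  rw [e16] at h5 h8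
  rw [abs_le]
  constructor <;> nlinarith

set_option maxHeartbeats 1600000 in
lemma key (V f : ℝ → ℝ) (l : ℝ) (hV : PerturbedQuartic V f l)
    (v₀ : ℝ) (hv₀ : 0 < v₀) (x : ℝ → ℝ → ℝ) (hx : SolutionFamily V x v₀) :
    ∃ a > (0:ℝ), a ≤ v₀ ∧ ∃ C > (0:ℝ), ∀ A : ℝ, |A| ≤ a → ∀ T : ℝ,
      |x A T - A * Real.sin ((1 + 3 * l * A ^ 2 / 8) * T)| ≤
        C * (|A| ^ 3 + |A| ^ 4 * |T|) := by
  obtain ⟨M, hM, d, hd, hd2, hMd, hb⟩ := pq_local V f l hV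
  have hl : |l| = 1 := by rcases hV.1 with h | h <;> simp [h]
  have hfd : Differentiable ℝ f := hV.2.1.differentiable (by norm_num)
  have hdV : ∀ u, deriv V u = u + l * u ^ 3 + deriv f u := by
    intro u
    have : V = fun x => x ^ 2 / 2 + l * x ^ 4 / 4 + f x := funext hV.2.2.1
    rw [this]
    apply HasDerivAt.deriv
    have h2 := ((hasDerivAt_id u).pow 2).div_const 2
    have h3 := (((hasDerivAt_id u).pow 4).const_mul l).div_const 4
    refine ((h2.add h3).add (hfd u).hasDerivAt).congr_deriv ?_
    simp
    ring
  set Q : ℝ := 16 * (1 + 2 * M) with hQ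
  have hQ0 : 0 < Q := by positivity
  refine ⟨min v₀ (d / 2), by positivity, min_le_left _ _, 1000 * (1 + M + Q), by positivity, ?_⟩
  intro A hA T
  obtain ⟨hC2, hx0, hy0, hode⟩ := hx A (hA.trans (min_le_left _ _))
  have hxd : ∀ t, HasDerivAt (x A) (deriv (x A) t) t := fun t =>
    (hC2.differentiable (by norm_num) t).hasDerivAt
  have hyd : ∀ t, HasDerivAt (deriv (x A))
      (-(x A t + l * x A t ^ 3 + deriv f (x A t))) t := by
    intro t
    rw [← hdV, ← hode]
    apply DifferentiableAt.hasDerivAt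
    have : ContDiff ℝ 1 (deriv (x A)) := by
      have h : ContDiff ℝ (1 + 1) (x A) := by convert hC2 using 1; norm_num
      exact (contDiff_succ_iff_deriv.1 h).2.2
    exact this.differentiable (by norm_num) t
  have htrap := trap V f l hV M d hM hd hd2 hMd hb A (hA.trans (min_le_right _ _)) (x A)
    (deriv (x A)) hxd hyd hx0 hy0
  generalize hX : x A = X at *
  generalize hY : deriv X = Y at *
  set w : ℝ := 1 + 3 * l * A ^ 2 / 8 with hw
  set r : ℝ := |A| with hr
  have hr0 : 0 ≤ r := abs_nonneg _
  have hr1 : r ≤ 1 / 4 := by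
    have := hA.trans (min_le_right _ _)
    linarith
  -- corrected variables
  have hPd : ∀ t, HasDerivAt (fun t => X t + l / 32 * (9 * (X t * Y t ^ 2) + 5 * X t ^ 3))
      (w * (Y t + l / 32 * (-3 * Y t ^ 3 - 15 * (X t ^ 2 * Y t))) +
        (3 * l / 8 * (X t ^ 2 + Y t ^ 2 - A ^ 2) * Y t
          - 3 * l / 8 * A ^ 2 * (l / 32 * (-3 * Y t ^ 3 - 15 * (X t ^ 2 * Y t)))
          - l / 32 * 18 * (X t * Y t) * (l * X t ^ 3 + deriv f (X t)))) t := by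
    intro t
    have h1 := ((hxd t).mul ((hyd t).pow 2)).const_mul 9
    have h2 := ((hxd t).pow 3).const_mul 5
    refine ((hxd t).add ((h1.add h2).const_mul (l / 32))).congr_deriv ?_
    simp only [hw]
    norm_num
    ring
  have hQd : ∀ t, HasDerivAt (fun t => Y t + l / 32 * (-3 * Y t ^ 3 - 15 * (X t ^ 2 * Y t)))
      (-w * (X t + l / 32 * (9 * (X t * Y t ^ 2) + 5 * X t ^ 3)) +
        (-deriv f (X t) - 3 * l / 8 * (X t ^ 2 + Y t ^ 2 - A ^ 2) * X t
          + 3 * l / 8 * A ^ 2 * (l / 32 * (9 * (X t * Y t ^ 2) + 5 * X t ^ 3))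
          + l / 32 * (9 * Y t ^ 2 + 15 * X t ^ 2) * (l * X t ^ 3 + deriv f (X t)))) t := by
    intro t
    have h1 := ((hyd t).pow 3).const_mul (-3)
    have h2 := (((hxd t).pow 2).mul (hyd t)).const_mul 15
    refine ((hyd t).add ((h1.sub h2).const_mul (l / 32))).congr_deriv ?_
    simp only [hw]
    norm_num
    ring
  set P : ℝ → ℝ := fun t => X t + l / 32 * (9 * (X t * Y t ^ 2) + 5 * X t ^ 3) with hPdef
  set R : ℝ → ℝ := fun t => Y t + l / 32 * (-3 * Y t ^ 3 - 15 * (X t ^ 2 * Y t)) with hRdef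
  have hbds : ∀ t, |X t| ≤ 2 * r ∧ |Y t| ≤ 2 * r ∧
      |X t ^ 2 + Y t ^ 2 - A ^ 2| ≤ Q * r ^ 4 ∧ |deriv f (X t)| ≤ 16 * M * r ^ 4 ∧
      |l * X t ^ 3 + deriv f (X t)| ≤ (8 + 4 * M) * r ^ 3 := by
    intro t
    obtain ⟨h1, h2, h3, h4⟩ := htrap t
    have h5 := (hb _ h1).2
    have h6 : |deriv f (X t)| ≤ 16 * M * r ^ 4 := by
      calc _ ≤ M * |X t| ^ 4 := h5
        _ ≤ M * (2 * r) ^ 4 := by gcongr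
        _ = _ := by ring
    refine ⟨h2, h3, h4, h6, ?_⟩
    calc |l * X t ^ 3 + deriv f (X t)| ≤ |l * X t ^ 3| + |deriv f (X t)| := abs_add_le _ _
      _ ≤ (2 * r) ^ 3 + 16 * M * r ^ 4 := by
        rw [abs_mul, hl, one_mul, abs_pow]
        gcongr
      _ = 8 * r ^ 3 + 16 * M * r ^ 3 * r := by ring
      _ ≤ 8 * r ^ 3 + 16 * M * r ^ 3 * (1 / 4) := by gcongr
      _ = _ := by ring
  have hcub1 : ∀ t, |l / 32 * (9 * (X t * Y t ^ 2) + 5 * X t ^ 3)| ≤ 4 * r ^ 3 := by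
    intro t
    obtain ⟨h2, h3, -⟩ := hbds t
    have e1 : |X t * Y t ^ 2| ≤ 2 * r * (2 * r) ^ 2 :=
      abs_mul_le' h2 (by rw [abs_pow]; gcongr)
    have e2 : |X t ^ 3| ≤ (2 * r) ^ 3 := by rw [abs_pow]; gcongr
    rw [abs_mul, abs_div, hl]
    have : |9 * (X t * Y t ^ 2) + 5 * X t ^ 3| ≤ 112 * r ^ 3 := by
      have := abs_le.1 e1
      have := abs_le.1 e2
      rw [abs_le]; constructor <;> nlinarith
    norm_num
    have : 0 ≤ r ^ 3 := by positivity
    linarith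
  have hcub2 : ∀ t, |l / 32 * (-3 * Y t ^ 3 - 15 * (X t ^ 2 * Y t))| ≤ 5 * r ^ 3 := by
    intro t
    obtain ⟨h2, h3, -⟩ := hbds t
    have e1 : |X t ^ 2 * Y t| ≤ (2 * r) ^ 2 * (2 * r) :=
      abs_mul_le' (by rw [abs_pow]; gcongr) h3
    have e2 : |Y t ^ 3| ≤ (2 * r) ^ 3 := by rw [abs_pow]; gcongr
    rw [abs_mul, abs_div, hl]
    have : |-3 * Y t ^ 3 - 15 * (X t ^ 2 * Y t)| ≤ 144 * r ^ 3 := by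
      have := abs_le.1 e1
      have := abs_le.1 e2
      rw [abs_le]; constructor <;> nlinarith
    norm_num
    norm_num at this
    have : 0 ≤ r ^ 3 := by positivity
    linarith
  have hA2 : |A ^ 2| = r ^ 2 := by rw [abs_pow]
  have hl8 : |3 * l / 8| ≤ 1 := by rw [abs_div, abs_mul, hl]; norm_num
  have hr5 : r ^ 5 ≤ r ^ 4 := pow_le_pow_of_le_one hr0 (by linarith) (by norm_num)
  set B : ℝ := 100 * (1 + M + Q) * r ^ 4 with hB
  have hE1 : ∀ t, |3 * l / 8 * (X t ^ 2 + Y t ^ 2 - A ^ 2) * Y t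
          - 3 * l / 8 * A ^ 2 * (l / 32 * (-3 * Y t ^ 3 - 15 * (X t ^ 2 * Y t)))
          - l / 32 * 18 * (X t * Y t) * (l * X t ^ 3 + deriv f (X t))| ≤ B := by
    intro t
    obtain ⟨h2, h3, h4, h5, h6⟩ := hbds t
    have k1 := abs_mul_le' (abs_mul_le' hl8 h4) h3
    have k2 := abs_mul_le' (abs_mul_le' hl8 hA2.le) (hcub2 t)
    have k3 : |l / 32 * 18 * (X t * Y t) * (l * X t ^ 3 + deriv f (X t))| ≤
        1 * (2 * r * (2 * r)) * ((8 + 4 * M) * r ^ 3) :=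
      abs_mul_le' (abs_mul_le' (by rw [abs_mul, abs_div, hl]; norm_num) (abs_mul_le' h2 h3)) h6
    refine (abs_sub _ _).trans ((add_le_add ((abs_sub _ _).trans (add_le_add k1 k2)) k3).trans ?_)
    have m1 := mul_le_mul_of_nonneg_left hr5 hM.le
    have m2 := mul_le_mul_of_nonneg_left hr5 hQ0.le
    have : 0 ≤ r ^ 4 := by positivity
    have := mul_nonneg hM.le this
    have : 0 ≤ Q * r ^ 4 := by positivity
    rw [hB]
    nlinarith
  have hE2 : ∀ t, |-deriv f (X t) - 3 * l / 8 * (X t ^ 2 + Y t ^ 2 - A ^ 2) * X t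
          + 3 * l / 8 * A ^ 2 * (l / 32 * (9 * (X t * Y t ^ 2) + 5 * X t ^ 3))
          + l / 32 * (9 * Y t ^ 2 + 15 * X t ^ 2) * (l * X t ^ 3 + deriv f (X t))| ≤ B := by
    intro t
    obtain ⟨h2, h3, h4, h5, h6⟩ := hbds t
    have k1 := abs_mul_le' (abs_mul_le' hl8 h4) h2
    have k2 := abs_mul_le' (abs_mul_le' hl8 hA2.le) (hcub1 t)
    have k0 : |-deriv f (X t)| ≤ 16 * M * r ^ 4 := by rwa [abs_neg]
    have kq : |9 * Y t ^ 2 + 15 * X t ^ 2| ≤ 96 * r ^ 2 := by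
      have a1 : |X t ^ 2| ≤ (2 * r) ^ 2 := by rw [abs_pow]; gcongr
      have a2 : |Y t ^ 2| ≤ (2 * r) ^ 2 := by rw [abs_pow]; gcongr
      have := abs_le.1 a1
      have := abs_le.1 a2
      rw [abs_le]; constructor <;> nlinarith
    have k3 : |l / 32 * (9 * Y t ^ 2 + 15 * X t ^ 2) * (l * X t ^ 3 + deriv f (X t))| ≤
        (1 / 32) * (96 * r ^ 2) * ((8 + 4 * M) * r ^ 3) :=
      abs_mul_le' (abs_mul_le' (by rw [abs_div, hl]; norm_num) kq) h6
    refine (abs_add_le _ _).trans ((add_le_add ((abs_add_le _ _).trans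
      (add_le_add ((abs_sub _ _).trans (add_le_add k0 k1)) k2)) k3).trans ?_)
    have m1 := mul_le_mul_of_nonneg_left hr5 hM.le
    have m2 := mul_le_mul_of_nonneg_left hr5 hQ0.le
    have : 0 ≤ r ^ 4 := by positivity
    have := mul_nonneg hM.le this
    have : 0 ≤ Q * r ^ 4 := by positivity
    rw [hB]
    nlinarith
  obtain ⟨E1, hE1f⟩ : ∃ E1 : ℝ → ℝ, ∀ t, HasDerivAt P (w * R t + E1 t) t ∧ |E1 t| ≤ B :=
    ⟨fun t => _, fun t => ⟨hPd t, hE1 t⟩⟩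
  obtain ⟨E2, hE2f⟩ : ∃ E2 : ℝ → ℝ, ∀ t, HasDerivAt R (-w * P t + E2 t) t ∧ |E2 t| ≤ B :=
    ⟨fun t => _, fun t => ⟨hQd t, hE2 t⟩⟩
  clear hE1 hE2 hPd hQd
  have hE1 := fun t => (hE1f t).2
  have hE2 := fun t => (hE2f t).2
  have hPd := fun t => (hE1f t).1
  have hQd := fun t => (hE2f t).1
  have hs : ∀ t, HasDerivAt (fun t => Real.sin (w * t)) (Real.cos (w * t) * w) t := fun t => by
    have := ((hasDerivAt_id t).const_mul w).sin
    simpa using this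
  have hc : ∀ t, HasDerivAt (fun t => Real.cos (w * t)) (-Real.sin (w * t) * w) t := fun t => by
    have := ((hasDerivAt_id t).const_mul w).cos
    simpa using this
  have b1 := lip_bound (fun t => P t * Real.cos (w * t) - R t * Real.sin (w * t))
    (fun t => E1 t * Real.cos (w * t) - E2 t * Real.sin (w * t)) (B * 1 + B * 1)
    (fun t => (((hPd t).mul (hc t)).sub ((hQd t).mul (hs t))).congr_deriv (by ring))
    (fun t => (abs_sub _ _).trans (add_le_add (abs_mul_le' (hE1 t) (Real.abs_cos_le_one _))
      (abs_mul_le' (hE2 t) (Real.abs_sin_le_one _)))) T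
  have b2 := lip_bound (fun t => P t * Real.sin (w * t) + R t * Real.cos (w * t))
    (fun t => E1 t * Real.sin (w * t) + E2 t * Real.cos (w * t)) (B * 1 + B * 1)
    (fun t => (((hPd t).mul (hs t)).add ((hQd t).mul (hc t))).congr_deriv (by ring))
    (fun t => (abs_add_le _ _).trans (add_le_add (abs_mul_le' (hE1 t) (Real.abs_sin_le_one _))
      (abs_mul_le' (hE2 t) (Real.abs_cos_le_one _)))) T
  simp only [mul_zero, Real.sin_zero, Real.cos_zero, mul_one, sub_zero, zero_add] at b1 b2
  have hP0 : P 0 = 0 := by simp [hPdef, hx0]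
  have hR0 := hcub2 0
  have hR0' : R 0 = A + l / 32 * (-3 * Y 0 ^ 3 - 15 * (X 0 ^ 2 * Y 0)) := by
    simp only [hRdef]; rw [hy0]
  rw [hP0, sub_zero] at b1
  rw [hR0'] at b2
  generalize l / 32 * (-3 * Y 0 ^ 3 - 15 * (X 0 ^ 2 * Y 0)) = q0 at *
  have hPT : P T = X T + l / 32 * (9 * (X T * Y T ^ 2) + 5 * X T ^ 3) := rfl
  have hcT := hcub1 T
  generalize l / 32 * (9 * (X T * Y T ^ 2) + 5 * X T ^ 3) = qT at *
  clear_value P R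
  have c1 := abs_mul_le' b1 (Real.abs_cos_le_one (w * T))
  have c2 := abs_mul_le' b2 (Real.abs_sin_le_one (w * T))
  have c3 := abs_mul_le' hR0 (Real.abs_sin_le_one (w * T))
  have hid : X T - A * Real.sin (w * T) =
      (P T * Real.cos (w * T) - R T * Real.sin (w * T)) * Real.cos (w * T) +
      (P T * Real.sin (w * T) + R T * Real.cos (w * T) - (A + q0)) * Real.sin (w * T) +
      q0 * Real.sin (w * T) - qT := by
    have := Real.sin_sq_add_cos_sq (w * T)
    linear_combination (-P T) * this - hPT
  rw [hid]
  refine (abs_sub _ _).trans ((add_le_add ((abs_add_le _ _).trans (add_le_add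
    ((abs_add_le _ _).trans (add_le_add c1 c2)) c3)) hcT).trans ?_)
  have : 0 ≤ r ^ 3 := by positivity
  have : 0 ≤ M * r ^ 3 := by positivity
  have : 0 ≤ Q * r ^ 3 := by positivity
  have : 0 ≤ r ^ 4 * |T| := by positivity
  have : 0 ≤ M * (r ^ 4 * |T|) := by positivity
  have : 0 ≤ Q * (r ^ 4 * |T|) := by positivity
  rw [hB]
  nlinarith

set_option maxHeartbeats 1600000 in
/-- there is `K > 0` such that for every `0 < ε < 1/3` the sup over
`v ∈ [-1,1]` and `t ∈ (0, K n^{1/3-ε}]` of `|x_n(v;t) - v sin(ℓt(v²-1))|` is at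
most `C n^{-3ε/2}` for all large `n`. -/
theorem statement2 (V f : ℝ → ℝ) (l : ℝ) (hV : PerturbedQuartic V f l)
    (v₀ : ℝ) (hv₀ : 0 < v₀) (x : ℝ → ℝ → ℝ) (hx : SolutionFamily V x v₀) :
    ∃ K > (0 : ℝ), ∀ e : ℝ, 0 < e → e < 1 / 3 →
      ∃ C > (0 : ℝ), ∃ N : ℕ, 1 ≤ N ∧
        ∀ n : ℕ, N ≤ n → ∀ v ∈ Set.Icc (-1 : ℝ) 1,
          ∀ t ∈ Set.Ioc (0 : ℝ) (K * (n : ℝ) ^ ((1 : ℝ) / 3 - e)),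
            -- `x_n(v;t)` is well defined:
            |Real.sqrt (8 * t / (3 * Real.pi * (n : ℝ))) * v| ≤ v₀ ∧
            |(-1 : ℝ) ^ n * (Real.sqrt (8 * t / (3 * Real.pi * (n : ℝ))))⁻¹ *
                x (Real.sqrt (8 * t / (3 * Real.pi * (n : ℝ))) * v) ((n : ℝ) * Real.pi - l * t) -
              v * Real.sin (l * t * (v ^ 2 - 1))| ≤ C * (n : ℝ) ^ (-(3 * e / 2)) := by
  obtain ⟨a, ha, hav, C, hC, hkey⟩ := key V f l hV v₀ hv₀ x hx
  have hl : |l| = 1 := by rcases hV.1 with h | h <;> simp [h]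
  have hll : l * l = 1 := by rcases hV.1 with h | h <;> simp [h]
  refine ⟨1, one_pos, fun e he0 he1 => ⟨6 * C + 1, by positivity, ?_⟩⟩
  have hlim : Tendsto (fun n : ℕ => (n : ℝ) ^ (-(1 / 3 : ℝ))) atTop (𝓝 0) :=
    (tendsto_rpow_neg_atTop (by norm_num)).comp tendsto_natCast_atTop_atTop
  obtain ⟨N, hN⟩ := eventually_atTop.1 (hlim.eventually (gt_mem_nhds ha))
  refine ⟨max N 1, le_max_right _ _, fun n hn v hv t ht => ?_⟩
  have hna := hN n ((le_max_left _ _).trans hn)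
  have hn1 : (1:ℝ) ≤ n := by exact_mod_cast (le_max_right _ _).trans hn
  have hn0 : (0:ℝ) < n := by linarith
  obtain ⟨ht0, ht1⟩ := ht
  rw [one_mul] at ht1
  have hpi := Real.pi_gt_three
  have hpi4 := Real.pi_le_four
  set G := Real.sqrt (8 * t / (3 * Real.pi * (n : ℝ))) with hG
  have harg : 0 < 8 * t / (3 * Real.pi * (n : ℝ)) := by positivity
  have hG0 : 0 < G := Real.sqrt_pos.2 harg
  have hG2 : G ^ 2 = 8 * t / (3 * Real.pi * (n : ℝ)) := Real.sq_sqrt harg.le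
  have hGt : G ^ 2 * (3 * Real.pi * n) = 8 * t := by rw [hG2]; field_simp
  set p : ℝ := (n:ℝ) ^ (-(1 / 3) - e / 2 : ℝ) with hp
  set D : ℝ := (n:ℝ) ^ (-(3 * e / 2)) with hD
  set U : ℝ := (n:ℝ) ^ ((1 : ℝ) / 3 - e) with hU
  have hp0 : 0 < p := by positivity
  have hD0 : 0 < D := by positivity
  have hU0 : 0 < U := by positivity
  have hUn : U ≤ n := by
    calc U ≤ (n:ℝ) ^ (1:ℝ) := Real.rpow_le_rpow_of_exponent_le hn1 (by linarith)
      _ = n := Real.rpow_one _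
  have hp2 : p ^ 2 = (n:ℝ) ^ (-(2 / 3) - e : ℝ) := by
    rw [hp, ← Real.rpow_mul_natCast hn0.le]; congr 1; push_cast; ring
  have hp2n : p ^ 2 * n = U := by
    rw [hp2, hU]
    nth_rewrite 2 [← Real.rpow_one (n:ℝ)]
    rw [← Real.rpow_add hn0]; congr 1; ring
  have hp3n : p ^ 3 * n = D := by
    rw [hp, hD, ← Real.rpow_mul_natCast hn0.le]
    nth_rewrite 2 [← Real.rpow_one (n:ℝ)]
    rw [← Real.rpow_add hn0]; congr 1; push_cast; ring
  have hp2D : p ^ 2 ≤ D := by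
    rw [hp2]; exact Real.rpow_le_rpow_of_exponent_le hn1 (by linarith)
  have hp2U : p ^ 2 * U ≤ D := by
    rw [hp2, hU, ← Real.rpow_add hn0]
    exact Real.rpow_le_rpow_of_exponent_le hn1 (by linarith)
  clear_value p D U G
  have hG2p : G ^ 2 ≤ p ^ 2 := by
    have h1 : G ^ 2 * (9 * n) ≤ G ^ 2 * (3 * Real.pi * n) := by gcongr; linarith
    have h2 : G ^ 2 * n ≤ p ^ 2 * n := by rw [hp2n]; nlinarith
    exact le_of_mul_le_mul_right h2 hn0
  have hGp : G ≤ p := by nlinarith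
  have hpa : p < a := by
    rw [hp]
    exact lt_of_le_of_lt (Real.rpow_le_rpow_of_exponent_le hn1 (by linarith)) hna
  have hv1 : |v| ≤ 1 := abs_le.2 hv
  have hAG : |G * v| ≤ G := by
    rw [abs_mul, abs_of_pos hG0]; nlinarith
  have hAa : |G * v| ≤ a := by linarith
  refine ⟨hAa.trans hav, ?_⟩
  have hk := hkey (G * v) hAa (n * Real.pi - l * t)
  have hT : |(n:ℝ) * Real.pi - l * t| ≤ 5 * n := by
    refine (abs_sub _ _).trans ?_
    rw [abs_mul, abs_mul, hl, abs_of_pos hn0, abs_of_pos Real.pi_pos, abs_of_pos ht0]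
    nlinarith
  have hk2 : |x (G * v) (n * Real.pi - l * t) - G * v * Real.sin
      ((1 + 3 * l * (G * v) ^ 2 / 8) * (n * Real.pi - l * t))| ≤ G * (6 * C * D) := by
    calc _ ≤ _ := hk
      _ ≤ C * (G ^ 3 + G ^ 4 * (5 * n)) := by gcongr
      _ = G * (C * (G ^ 2 + 5 * (G ^ 3 * n))) := by ring
      _ ≤ G * (C * (p ^ 2 + 5 * (p ^ 3 * n))) := by gcongr
      _ ≤ G * (C * (D + 5 * D)) := by rw [hp3n]; gcongr
      _ = _ := by ring
  have harg2 : (1 + 3 * l * (G * v) ^ 2 / 8) * (n * Real.pi - l * t) =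
      (l * t * (v ^ 2 - 1) - 3 * (G * v) ^ 2 * t / 8) + n * Real.pi := by
    linear_combination (l * v ^ 2 / 8) * hGt - (3 * (G * v) ^ 2 * t / 8) * hll
  rw [harg2, Real.sin_add_nat_mul_pi] at hk2
  have hsin : |Real.sin (l * t * (v ^ 2 - 1) - 3 * (G * v) ^ 2 * t / 8) -
      Real.sin (l * t * (v ^ 2 - 1))| ≤ D := by
    have h1 := lip_bound (fun s => Real.sin (l * t * (v ^ 2 - 1) + s))
      (fun s => Real.cos (l * t * (v ^ 2 - 1) + s)) 1
      (fun s => by simpa using ((hasDerivAt_id s).const_add (l * t * (v ^ 2 - 1))).sin)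
      (fun s => Real.abs_cos_le_one _) (-(3 * (G * v) ^ 2 * t / 8))
    rw [add_zero, ← sub_eq_add_neg, one_mul, abs_neg,
      abs_of_nonneg (show 0 ≤ 3 * (G * v) ^ 2 * t / 8 by positivity)] at h1
    refine h1.trans ?_
    have h2 : (G * v) ^ 2 ≤ p ^ 2 := by
      rw [← sq_abs]; gcongr; linarith
    calc 3 * (G * v) ^ 2 * t / 8 = 3 / 8 * ((G * v) ^ 2 * t) := by ring
      _ ≤ 3 / 8 * (p ^ 2 * U) := by gcongr
      _ ≤ D := by linarith
  generalize Real.sin (l * t * (v ^ 2 - 1) - 3 * (G * v) ^ 2 * t / 8) = s1 at *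
  generalize Real.sin (l * t * (v ^ 2 - 1)) = s2 at *
  generalize x (G * v) (n * Real.pi - l * t) = X at *
  have hone : ((-1:ℝ) ^ n) * (-1) ^ n = 1 := by rw [← mul_pow]; norm_num
  have hone' : |((-1:ℝ) ^ n)| = 1 := by simp
  have hid : (-1) ^ n * G⁻¹ * X - v * s2 =
      (-1) ^ n * (G⁻¹ * (X - G * v * ((-1) ^ n * s1))) + v * (s1 - s2) := by
    have : G⁻¹ * G = 1 := inv_mul_cancel₀ hG0.ne'
    linear_combination (v * s1 * ((-1:ℝ) ^ n * (-1) ^ n)) * this + (v * s1) * hone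
  rw [hid]
  refine (abs_add_le _ _).trans ?_
  rw [abs_mul, hone', one_mul, abs_mul, abs_of_pos (inv_pos.2 hG0)]
  have h1 : G⁻¹ * |X - G * v * ((-1) ^ n * s1)| ≤ 6 * C * D := by
    rw [inv_mul_le_iff₀ hG0]; exact hk2
  have h2 := abs_mul_le' hv1 hsin
  linarith
end

section
/- Fix ℓ ∈ {−1,1} and T > 0. There exist δ₁ > 0, δ₂ > 0, δ₃ > 0 and K > 0 with the following properties. For every |v| < δ₁ and every C² function ε : [−δ₂, δ₂] → ℝ with ε(0) = 0 and C²-norm less than δ₃, the ordinary differential equation ẍ + x + ℓx³ + ε(x) = 0 has a unique C² solution x_ε(v;·) on [0,T] with x_ε(v;0) = 0, ẋ_ε(v;0) = v and |x_ε(v;t)| ≤ δ₂ for all t ∈ [0,T]. Moreover, the map ε ↦ x_ε(v;·) from such perturbations to C²([0,T]) is Fréchet differentiable, and its derivative at ε satisfies, for every C² perturbation direction α, the bound ‖(δx_ε/δε)·α‖_{C²([0,T])} ≤ K · sup_{t ∈ [0,T]} |α(x_ε(v;t))|. -/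
open Real

/-- The C²-norm of `g` over the set `s`: the sup of `|g|, |g'|, |g''|` on `s`. -/
noncomputable def C2Norm (g : ℝ → ℝ) (s : Set ℝ) : ℝ :=
  sSup ((fun t => max |g t| (max |deriv g t| |deriv (deriv g) t|)) '' s)

/-- An admissible perturbation: a C² function `ε` with `ε(0) = 0` whose C²-norm
on `[-δ₂,δ₂]` is less than `δ₃`. -/
def AdmissiblePerturbation (δ₂ δ₃ : ℝ) (e : ℝ → ℝ) : Prop :=
  ContDiff ℝ 2 e ∧ e 0 = 0 ∧ C2Norm e (Set.Icc (-δ₂) δ₂) < δ₃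

/-- `y` is a C² solution of `ẍ + x + ℓx³ + ε(x) = 0` on `[0,T]` with `y(0) = 0`,
`ẏ(0) = v` and `|y| ≤ δ₂` on `[0,T]`. -/
def IsPerturbedSolution (l : ℝ) (e : ℝ → ℝ) (v δ₂ T : ℝ) (y : ℝ → ℝ) : Prop :=
  ContDiff ℝ 2 y ∧ y 0 = 0 ∧ deriv y 0 = v ∧
  ∀ t ∈ Set.Icc (0 : ℝ) T, |y t| ≤ δ₂ ∧
    deriv (deriv y) t + y t + l * y t ^ 3 + e (y t) = 0

lemma s10_gron_pair {T : ℝ} {f f' : ℝ → ℝ × ℝ} {a d : ℝ} (hd : 0 ≤ d) (ha : 0 ≤ a)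
    (hc : ContinuousOn f (Set.Icc 0 T))
    (hf : ∀ t ∈ Set.Ico 0 T, HasDerivWithinAt f (f' t) (Set.Ici t) t)
    (h0 : ‖f 0‖ ≤ a) (hb : ∀ t ∈ Set.Ico 0 T, ‖f' t‖ ≤ 5 * ‖f t‖ + d) :
    ∀ t ∈ Set.Icc 0 T, ‖f t‖ ≤ (a + d) * exp (5 * T) := by
  intro t ht
  have := norm_le_gronwallBound_of_norm_deriv_right_le hc hf h0 hb t ht
  refine this.trans ?_
  rw [gronwallBound_of_K_ne_0 (by norm_num)]
  simp only [sub_zero]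
  have h1 : exp (5 * t) ≤ exp (5 * T) := exp_le_exp.2 (by linarith [ht.2])
  have h2 : 0 < exp (5 * t) := exp_pos _
  have h3 := mul_le_mul_of_nonneg_left h1 ha
  have h4 := mul_le_mul_of_nonneg_left h1 hd
  have h5 := mul_nonneg hd h2.le
  nlinarith

lemma s10_c2 {y : ℝ → ℝ} (hy : ContDiff ℝ 2 y) :
    Differentiable ℝ y ∧ Differentiable ℝ (deriv y) ∧ Continuous (deriv (deriv y)) := by
  have h : ContDiff ℝ (1 + 1) y := by simpa [one_add_one_eq_two] using hy
  rw [contDiff_succ_iff_deriv] at h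
  have h2 := contDiff_one_iff_deriv.1 h.2.2
  exact ⟨h.1, h2.1, h2.2⟩

lemma s10_gron {T : ℝ} {y : ℝ → ℝ} {a d : ℝ} (hd : 0 ≤ d) (ha : 0 ≤ a)
    (hy : ContDiff ℝ 2 y) (h0 : |y 0| ≤ a) (h1 : |deriv y 0| ≤ a)
    (hb : ∀ t ∈ Set.Icc 0 T, |deriv (deriv y) t| ≤ 5 * |y t| + d) :
    ∀ t ∈ Set.Icc 0 T, |y t| ≤ (a + d) * exp (5 * T) ∧
      |deriv y t| ≤ (a + d) * exp (5 * T) := by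
  obtain ⟨c0, c1, c2⟩ := s10_c2 hy
  intro t ht
  have := s10_gron_pair (T := T) (f := fun t => (y t, deriv y t))
    (f' := fun t => (deriv y t, deriv (deriv y) t)) hd ha
    (c0.continuous.prodMk c1.continuous).continuousOn
    (fun t _ => ((c0 t).hasDerivAt.prodMk (c1 t).hasDerivAt).hasDerivWithinAt)
    (by simpa [Prod.norm_def] using ⟨h0, h1⟩)
    (by
      intro t ht
      have := hb t ⟨ht.1, ht.2.le⟩
      simp only [Prod.norm_def, Real.norm_eq_abs]
      have e1 := le_max_left |y t| |deriv y t|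
      have e2 := le_max_right |y t| |deriv y t|
      have e3 := abs_nonneg (deriv y t)
      exact max_le (by linarith) (by linarith)) t ht
  simpa [Prod.norm_def] using this

/-- clamp -/
noncomputable def s10cl (R x : ℝ) : ℝ := max (-R) (min R x)

lemma s10cl_lip (R x y : ℝ) : |s10cl R x - s10cl R y| ≤ |x - y| := by
  unfold s10cl
  refine (abs_max_sub_max_le_max _ _ _ _).trans ?_
  simp only [sub_self, abs_zero]
  refine max_le (abs_nonneg _) ?_
  refine (abs_min_sub_min_le_max _ _ _ _).trans ?_
  simp

lemma s10cl_eq {R x : ℝ} (h : |x| ≤ R) : s10cl R x = x := by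
  have := abs_le.1 h
  rw [s10cl, min_eq_right this.2, max_eq_right this.1]

lemma s10cl_abs {R : ℝ} (hR : 0 ≤ R) (x : ℝ) : |s10cl R x| ≤ |x| := by
  have := s10cl_lip R x 0
  rwa [s10cl_eq (x := 0) (by simpa using hR), sub_zero, sub_zero] at this

lemma s10cl_le {R : ℝ} (hR : 0 ≤ R) (x : ℝ) : |s10cl R x| ≤ R := by
  unfold s10cl
  exact abs_le.2 ⟨le_max_left _ _, max_le (by linarith) (min_le_left _ _)⟩

lemma s10cl_cont (R : ℝ) : Continuous (s10cl R) := by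
  unfold s10cl; fun_prop

lemma s10_exist {T : ℝ} (hT : 0 < T) (G : ℝ → ℝ → ℝ) (hG : Continuous (Function.uncurry G))
    (hL : ∀ t ∈ Set.Icc 0 T, ∀ x y, |G t x - G t y| ≤ 5 * |x - y|) {d : ℝ} (hd : 0 ≤ d)
    (hB : ∀ t ∈ Set.Icc 0 T, ∀ x, |G t x| ≤ 5 * |x| + d) (v : ℝ) :
    ∃ y : ℝ → ℝ, ContDiff ℝ 2 y ∧ y 0 = 0 ∧ deriv y 0 = v ∧
      ∀ t ∈ Set.Icc 0 T, deriv (deriv y) t = G t (y t) := by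
  set R : ℝ := (|v| + d) * exp (5 * T) with hR
  have hR0 : 0 ≤ R := by positivity
  set Φ : ℝ → ℝ × ℝ → ℝ × ℝ := fun t z => (s10cl R z.2, G t (s10cl R z.1)) with hΦ
  have hbd : ∀ t ∈ Set.Icc 0 T, ∀ z, ‖Φ t z‖ ≤ 5 * ‖z‖ + d := by
    intro t ht z
    simp only [hΦ, Prod.norm_def, Real.norm_eq_abs]
    have e1 := le_max_left |z.1| |z.2|
    have e2 := le_max_right |z.1| |z.2|
    have e3 := s10cl_abs hR0 z.1
    have e4 := s10cl_abs hR0 z.2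
    have e5 := hB t ht (s10cl R z.1)
    have e6 := abs_nonneg z.2
    exact max_le (by linarith) (by linarith)
  have hbd2 : ∀ t ∈ Set.Icc 0 T, ∀ z, ‖Φ t z‖ ≤ 5 * R + d := by
    intro t ht z
    simp only [hΦ, Prod.norm_def, Real.norm_eq_abs]
    have e3 := s10cl_le hR0 z.1
    have e4 := s10cl_le hR0 z.2
    have e5 := hB t ht (s10cl R z.1)
    exact max_le (by linarith) (by linarith)
  have hPL : IsPicardLindelof Φ (tmin := 0) (tmax := T) ⟨0, by simp [hT.le]⟩ ((0, v) : ℝ × ℝ)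
      (Real.toNNReal ((5 * R + d) * T)) 0 (Real.toNNReal (5 * R + d)) 5 := by
    refine ⟨?_, ?_, ?_, ?_⟩
    · intro t ht
      refine LipschitzWith.lipschitzOnWith ?_
      refine LipschitzWith.of_dist_le_mul fun z w => ?_
      simp only [hΦ, Prod.dist_eq, Real.dist_eq]
      have e1 := le_max_left |z.1 - w.1| |z.2 - w.2|
      have e2 := le_max_right |z.1 - w.1| |z.2 - w.2|
      have e3 := s10cl_lip R z.1 w.1
      have e4 := s10cl_lip R z.2 w.2
      have e5 := hL t ht (s10cl R z.1) (s10cl R w.1)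
      have e6 := abs_nonneg (z.2 - w.2)
      have : ((5 : NNReal) : ℝ) = 5 := rfl
      rw [this]
      exact max_le (by linarith) (by linarith)
    · intro z _
      refine Continuous.continuousOn ?_
      simp only [hΦ]
      exact continuous_const.prodMk (hG.comp (continuous_id.prodMk continuous_const))
    · intro t ht z _
      rw [Real.coe_toNNReal _ (by positivity)]
      exact hbd2 t ht z
    · rw [Real.coe_toNNReal _ (by positivity), Real.coe_toNNReal _ (by positivity)]
      simp [hT.le]
  obtain ⟨f, hf0, hf⟩ := hPL.exists_eq_forall_mem_Icc_hasDerivWithinAt₀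
  have hf0 : f 0 = (0, v) := hf0
  have hfc : ContinuousOn f (Set.Icc 0 T) := fun t ht => (hf t ht).continuousWithinAt
  have hfr : ∀ t ∈ Set.Ico 0 T, HasDerivWithinAt f (Φ t (f t)) (Set.Ici t) t := fun t ht =>
    (hf t ⟨ht.1, ht.2.le⟩).mono_of_mem_nhdsWithin (Icc_mem_nhdsGE_of_mem ht)
  have hfb : ∀ t ∈ Set.Icc 0 T, ‖f t‖ ≤ R :=
    s10_gron_pair hd (abs_nonneg v) hfc hfr (by simp [hf0, Prod.norm_def])
      (fun t ht => hbd t ⟨ht.1, ht.2.le⟩ _)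
  have hf1 : ∀ t ∈ Set.Icc 0 T, s10cl R (f t).1 = (f t).1 := fun t ht =>
    s10cl_eq ((le_max_left _ _).trans (hfb t ht))
  have hf2 : ∀ t ∈ Set.Icc 0 T, s10cl R (f t).2 = (f t).2 := fun t ht =>
    s10cl_eq ((le_max_right _ _).trans (hfb t ht))
  -- extension
  set g : ℝ → ℝ := Set.IccExtend hT.le (fun t : Set.Icc 0 T => G t (f t).1) with hg
  have hgc : Continuous g := by
    refine Continuous.Icc_extend' ?_
    have : Continuous (fun t : Set.Icc 0 T => f t) := continuousOn_iff_continuous_domRestrict.1 hfc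
    exact hG.comp (continuous_subtype_val.prodMk this.fst)
  have hgt : ∀ t ∈ Set.Icc 0 T, g t = G t (f t).1 := fun t ht => by
    rw [hg, Set.IccExtend_of_mem _ _ ht]
  set P : ℝ → ℝ := fun t => v + ∫ s in (0 : ℝ)..t, g s with hP
  have hPd : ∀ t, HasDerivAt P (g t) t := fun t =>
    (intervalIntegral.integral_hasDerivAt_right (hgc.intervalIntegrable _ _)
      (hgc.stronglyMeasurableAtFilter _ _) hgc.continuousAt).const_add v
  have hPc : Continuous P := continuous_iff_continuousAt.2 fun t => (hPd t).continuousAt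
  set y : ℝ → ℝ := fun t => ∫ s in (0 : ℝ)..t, P s with hy
  have hyd : ∀ t, HasDerivAt y (P t) t := fun t =>
    (intervalIntegral.integral_hasDerivAt_right (hPc.intervalIntegrable _ _)
      (hPc.stronglyMeasurableAtFilter _ _) hPc.continuousAt)
  have hdy : deriv y = P := funext fun t => (hyd t).deriv
  have hdP : deriv P = g := funext fun t => (hPd t).deriv
  have hyc : Continuous y := continuous_iff_continuousAt.2 fun t => (hyd t).continuousAt
  have hPf : ∀ t ∈ Set.Icc 0 T, P t = (f t).2 := by
    refine eq_of_has_deriv_right_eq (f' := g) (fun t _ => (hPd t).hasDerivWithinAt) ?_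
      hPc.continuousOn hfc.snd ?_
    · intro t ht
      have h := (ContinuousLinearMap.snd ℝ ℝ ℝ).hasFDerivAt.comp_hasDerivWithinAt t (hfr t ht)
      have ht' : t ∈ Set.Icc 0 T := ⟨ht.1, ht.2.le⟩
      simpa [hΦ, hf1 t ht', hgt t ht', Function.comp_def] using h
    · simp [hP, hf0]
  have hyf : ∀ t ∈ Set.Icc 0 T, y t = (f t).1 := by
    refine eq_of_has_deriv_right_eq (f' := P) (fun t _ => (hyd t).hasDerivWithinAt) ?_
      hyc.continuousOn hfc.fst ?_
    · intro t ht
      have h := (ContinuousLinearMap.fst ℝ ℝ ℝ).hasFDerivAt.comp_hasDerivWithinAt t (hfr t ht)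
      have ht' : t ∈ Set.Icc 0 T := ⟨ht.1, ht.2.le⟩
      simpa [hΦ, hf2 t ht', hPf t ht', Function.comp_def] using h
    · simp [hy, hf0]
  refine ⟨y, ?_, by simp [hy], by simp [hdy, hP], ?_⟩
  · have : ContDiff ℝ (1 + 1) y := by
      rw [contDiff_succ_iff_deriv]
      refine ⟨fun t => (hyd t).differentiableAt, by simp, ?_⟩
      rw [hdy, contDiff_one_iff_deriv, hdP]
      exact ⟨fun t => (hPd t).differentiableAt, hgc⟩
    simpa [one_add_one_eq_two] using this
  · intro t ht
    rw [hdy, hdP, hgt t ht, hyf t ht]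

lemma s10_pinv {H W : Type*} [AddCommGroup H] [Module ℝ H] [AddCommGroup W] [Module ℝ W]
    (D : H →ₗ[ℝ] W) : ∃ R : W →ₗ[ℝ] H, ∀ h, D (R (D h)) = D h := by
  obtain ⟨g, hg⟩ := D.rangeRestrict.exists_rightInverse_of_surjective D.range_rangeRestrict
  obtain ⟨R, hR⟩ := LinearMap.exists_extend g
  refine ⟨R, fun h => ?_⟩
  have h1 : R (D h) = g (D.rangeRestrict h) := by
    rw [← hR]; rfl
  rw [h1]
  exact congrArg Subtype.val (LinearMap.congr_fun hg (D.rangeRestrict h))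

lemma s10_norm_le {y : ℝ → ℝ} {a b B : ℝ} (hab : a ≤ b)
    (h : ∀ t ∈ Set.Icc a b, |y t| ≤ B ∧ |deriv y t| ≤ B ∧ |deriv (deriv y) t| ≤ B) :
    C2Norm y (Set.Icc a b) ≤ B := by
  refine csSup_le ((Set.nonempty_Icc.2 hab).image _) ?_
  rintro _ ⟨t, ht, rfl⟩
  obtain ⟨h1, h2, h3⟩ := h t ht
  exact max_le h1 (max_le h2 h3)

lemma s10_le_norm {y : ℝ → ℝ} {a b : ℝ} (hy : ContDiff ℝ 2 y) :
    ∀ t ∈ Set.Icc a b, |y t| ≤ C2Norm y (Set.Icc a b) ∧ |deriv y t| ≤ C2Norm y (Set.Icc a b)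
      ∧ |deriv (deriv y) t| ≤ C2Norm y (Set.Icc a b) := by
  obtain ⟨c0, c1, c2⟩ := s10_c2 hy
  intro t ht
  have hc : Continuous (fun t => max |y t| (max |deriv y t| |deriv (deriv y) t|)) :=
    c0.continuous.abs.max (c1.continuous.abs.max c2.abs)
  have := le_csSup (isCompact_Icc.bddAbove_image (K := Set.Icc a b) hc.continuousOn)
    (Set.mem_image_of_mem _ ht)
  have h := max_le_iff.1 this
  have h' := max_le_iff.1 h.2
  exact ⟨h.1, h'.1, h'.2⟩

lemma s10_lip {g : ℝ → ℝ} {N : ℝ} (hg : ContDiff ℝ 2 g)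
    (hN : ∀ t ∈ Set.Icc (-1 : ℝ) 1, |deriv g t| ≤ N) {x z : ℝ}
    (hx : |x| ≤ 1) (hz : |z| ≤ 1) : |g z - g x| ≤ N * |z - x| :=
  Convex.norm_image_sub_le_of_norm_deriv_le (fun t _ => (s10_c2 hg).1 t) hN (convex_Icc _ _)
    (abs_le.1 hx) (abs_le.1 hz)

lemma s10_taylor {e : ℝ → ℝ} (he : ContDiff ℝ 2 e)
    (hN : ∀ t ∈ Set.Icc (-1 : ℝ) 1, |deriv (deriv e) t| ≤ 1) {x z : ℝ}
    (hx : |x| ≤ 1) (hz : |z| ≤ 1) :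
    |e z - e x - deriv e x * (z - x)| ≤ |z - x| * |z - x| := by
  obtain ⟨c0, c1, c2⟩ := s10_c2 he
  have hsub : Set.uIcc x z ⊆ Set.Icc (-1 : ℝ) 1 :=
    Set.uIcc_subset_Icc (abs_le.1 hx) (abs_le.1 hz)
  have hd : ∀ s, HasDerivAt (fun s => e s - deriv e x * s) (deriv e s - deriv e x) s := fun s => by
    have h := (c0 s).hasDerivAt.sub ((hasDerivAt_id s).const_mul (deriv e x))
    rw [mul_one] at h
    exact h
  have := Convex.norm_image_sub_le_of_norm_deriv_le (f := fun s => e s - deriv e x * s)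
    (s := Set.uIcc x z) (x := x) (y := z) (C := |z - x|)
    (fun s _ => (hd s).differentiableAt) (fun s hs => by
      rw [(hd s).deriv]
      have h1 : ‖deriv e s - deriv e x‖ ≤ 1 * ‖s - x‖ :=
        Convex.norm_image_sub_le_of_norm_deriv_le (fun t _ => c1 t) hN (convex_Icc _ _)
          (abs_le.1 hx) (hsub hs)
      have h2 : |s - x| ≤ |z - x| := Set.abs_sub_left_of_mem_uIcc hs
      rw [Real.norm_eq_abs, Real.norm_eq_abs] at h1
      rw [Real.norm_eq_abs]
      linarith) (convex_uIcc _ _) Set.left_mem_uIcc Set.right_mem_uIcc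
  rw [Real.norm_eq_abs, Real.norm_eq_abs] at this
  convert this using 2
  ring

lemma s10_f_lip {l : ℝ} (hl : |l| = 1) {e : ℝ → ℝ} (he : ContDiff ℝ 2 e)
    (hN : ∀ t ∈ Set.Icc (-1 : ℝ) 1, |deriv e t| ≤ 1) {x z : ℝ}
    (hx : |x| ≤ 1) (hz : |z| ≤ 1) :
    |(z + l * z ^ 3 + e z) - (x + l * x ^ 3 + e x)| ≤ 5 * |z - x| := by
  have h1 := s10_lip he hN hx hz
  have h2 : |l * ((z ^ 2 + z * x + x ^ 2) * (z - x))| ≤ 3 * |z - x| := by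
    rw [abs_mul, hl, one_mul, abs_mul]
    refine mul_le_mul_of_nonneg_right ?_ (abs_nonneg _)
    have := abs_le.1 hx
    have := abs_le.1 hz
    rw [abs_le]; constructor <;> nlinarith
  have h3 : (z + l * z ^ 3 + e z) - (x + l * x ^ 3 + e x) =
    (z - x) + l * ((z ^ 2 + z * x + x ^ 2) * (z - x)) + (e z - e x) := by ring
  rw [h3]
  have := abs_add_three (z - x) (l * ((z ^ 2 + z * x + x ^ 2) * (z - x))) (e z - e x)
  linarith

lemma s10_q {l : ℝ} (hl : |l| = 1) {e : ℝ → ℝ}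
    (hN : ∀ t ∈ Set.Icc (-1 : ℝ) 1, |deriv e t| ≤ 1) {x : ℝ} (hx : |x| ≤ 1) :
    |1 + 3 * l * x ^ 2 + deriv e x| ≤ 5 := by
  have h1 := hN x (abs_le.1 hx)
  have h2 : |3 * l * x ^ 2| ≤ 3 := by
    rw [abs_mul, abs_mul, hl, abs_pow]
    have := abs_nonneg x
    norm_num
    nlinarith
  have := abs_add_three 1 (3 * l * x ^ 2) (deriv e x)
  rw [abs_one] at this
  linarith

lemma s10_sol_exists {l : ℝ} (hl : |l| = 1) {T : ℝ} (hT : 0 < T) {e : ℝ → ℝ}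
    (he : ContDiff ℝ 2 e) (he0 : e 0 = 0)
    (hN : ∀ t ∈ Set.Icc (-1 : ℝ) 1, |deriv e t| ≤ 1) {v : ℝ} (hv : |v| < exp (-(5 * T))) :
    ∃ y, IsPerturbedSolution l e v 1 T y := by
  have hlip : ∀ x y, |(-(s10cl 1 x + l * s10cl 1 x ^ 3 + e (s10cl 1 x)))
      - (-(s10cl 1 y + l * s10cl 1 y ^ 3 + e (s10cl 1 y)))| ≤ 5 * |x - y| := by
    intro x y
    have h1 := s10_f_lip hl he hN (s10cl_le zero_le_one x) (s10cl_le zero_le_one y)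
    have h2 := s10cl_lip 1 y x
    rw [neg_sub_neg, abs_sub_comm x y]
    linarith
  have hz : s10cl 1 0 = 0 := s10cl_eq (by simp)
  obtain ⟨y, hy, hy0, hy1, hyt⟩ := s10_exist hT
    (fun _ x => -(s10cl 1 x + l * s10cl 1 x ^ 3 + e (s10cl 1 x)))
    (by
      have := s10cl_cont 1
      have := he.continuous
      simp only [Function.uncurry_def]
      fun_prop) (fun _ _ => hlip) le_rfl
    (fun t _ x => by
      have := hlip x 0
      simpa [hz, he0] using this) v
  have hb : ∀ t ∈ Set.Icc 0 T, |y t| ≤ 1 := by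
    intro t ht
    have := (s10_gron (T := T) (a := |v|) (d := 0) le_rfl (abs_nonneg v) hy (by simp [hy0])
      (by simp [hy1]) (fun t ht => by
        rw [hyt t ht]
        have := hlip (y t) 0
        simpa [hz, he0] using this) t ht).1
    refine this.trans ?_
    rw [add_zero]
    have h := mul_le_mul_of_nonneg_right hv.le (exp_pos (5 * T)).le
    rwa [← exp_add, neg_add_cancel, exp_zero] at h
  refine ⟨y, hy, hy0, hy1, fun t ht => ⟨hb t ht, ?_⟩⟩
  rw [hyt t ht, s10cl_eq (hb t ht)]
  ring

/-- Difference of solutions for two perturbations. -/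
lemma s10_diff {l : ℝ} (hl : |l| = 1) {T : ℝ} {e a : ℝ → ℝ}
    (he : ContDiff ℝ 2 e)
    (hN : ∀ t ∈ Set.Icc (-1 : ℝ) 1, |deriv e t| ≤ 1) {v N : ℝ} (hN0 : 0 ≤ N)
    (ha : ∀ t ∈ Set.Icc (-1 : ℝ) 1, |a t| ≤ N) {x z : ℝ → ℝ}
    (hx : IsPerturbedSolution l e v 1 T x) (hz : IsPerturbedSolution l (e + a) v 1 T z) :
    ∀ t ∈ Set.Icc 0 T, |z t - x t| ≤ N * exp (5 * T) := by
  obtain ⟨hx2, hx0, hx1, hxt⟩ := hx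
  obtain ⟨hz2, hz0, hz1, hzt⟩ := hz
  obtain ⟨cx0, cx1, _⟩ := s10_c2 hx2
  obtain ⟨cz0, cz1, _⟩ := s10_c2 hz2
  have hd : deriv (z - x) = deriv z - deriv x := funext fun t => deriv_sub (cz0 t) (cx0 t)
  have hdd : deriv (deriv (z - x)) = deriv (deriv z) - deriv (deriv x) := by
    rw [hd]; exact funext fun t => deriv_sub (cz1 t) (cx1 t)
  intro t ht
  have := (s10_gron (T := T) (a := 0) (d := N) hN0 le_rfl (hz2.sub hx2) (by simp [hx0, hz0])
    (by
      have : deriv (z - x) 0 = 0 := by rw [hd]; simp [hx1, hz1]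
      exact (by rw [this]; simp : |deriv (z - x) 0| ≤ 0))
    (fun t ht => by
      have e1 := hxt t ht
      have e2 := hzt t ht
      have e3 := s10_f_lip hl he hN e1.1 e2.1
      have e4 := ha (z t) (abs_le.1 e2.1)
      have e6 : deriv (deriv (z - x)) t =
        -((z t + l * z t ^ 3 + e (z t)) - (x t + l * x t ^ 3 + e (x t))) - a (z t) := by
        have := e2.2
        rw [hdd]
        simp only [Pi.sub_apply, Pi.add_apply] at this ⊢
        linarith [e1.2]
      have e7 : |deriv (deriv (z - x)) t| ≤ 5 * |z t - x t| + N := by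
        rw [e6]
        refine (abs_sub _ _).trans ?_
        rw [abs_neg]
        linarith
      exact e7) t ht).1
  simpa using this

/-- The space of `C²` functions with vanishing initial data. -/
def s10H : Submodule ℝ (ℝ → ℝ) where
  carrier := {h | ContDiff ℝ 2 h ∧ h 0 = 0 ∧ deriv h 0 = 0}
  add_mem' := by
    rintro f g ⟨f1, f2, f3⟩ ⟨g1, g2, g3⟩
    refine ⟨f1.add g1, by simp [f2, g2], ?_⟩
    rw [deriv_add ((s10_c2 f1).1 0) ((s10_c2 g1).1 0), f3, g3, add_zero]
  zero_mem' := ⟨contDiff_const, rfl, by simp⟩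
  smul_mem' := by
    rintro c f ⟨f1, f2, f3⟩
    refine ⟨contDiff_const.smul f1, by simp [f2], ?_⟩
    rw [deriv_const_smul c ((s10_c2 f1).1 0), f3, smul_zero]

/-- The linearized operator. -/
noncomputable def s10D (T : ℝ) (q : ℝ → ℝ) : s10H →ₗ[ℝ] (Set.Icc 0 T → ℝ) where
  toFun h := fun t => deriv (deriv h.1) t + q t * h.1 t
  map_add' := by
    rintro ⟨f, f1, f2, f3⟩ ⟨g, g1, g2, g3⟩
    have hd : deriv (f + g) = deriv f + deriv g :=
      funext fun t => deriv_add ((s10_c2 f1).1 t) ((s10_c2 g1).1 t)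
    have hdd : deriv (deriv (f + g)) = deriv (deriv f) + deriv (deriv g) := by
      rw [hd]; exact funext fun t => deriv_add ((s10_c2 f1).2.1 t) ((s10_c2 g1).2.1 t)
    ext t
    simp only [Submodule.coe_add, Pi.add_apply, hdd]
    ring
  map_smul' := by
    rintro c ⟨f, f1, f2, f3⟩
    have hd : deriv (c • f) = c • deriv f :=
      funext fun t => deriv_const_smul c ((s10_c2 f1).1 t)
    have hdd : deriv (deriv (c • f)) = c • deriv (deriv f) := by
      rw [hd]; exact funext fun t => deriv_const_smul c ((s10_c2 f1).2.1 t)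
    ext t
    simp only [Submodule.coe_smul, Pi.smul_apply, hdd, smul_eq_mul, RingHom.id_apply]
    ring

lemma s10_L {T : ℝ} (hT : 0 < T) {q x : ℝ → ℝ} (hq : Continuous q) (hx : Continuous x)
    (hq5 : ∀ t ∈ Set.Icc 0 T, |q t| ≤ 5) :
    ∃ L : (ℝ → ℝ) →ₗ[ℝ] (ℝ → ℝ), ∀ a : ℝ → ℝ, Continuous a →
      ContDiff ℝ 2 (L a) ∧ L a 0 = 0 ∧ deriv (L a) 0 = 0 ∧
      ∀ t ∈ Set.Icc 0 T, deriv (deriv (L a)) t = -(q t * L a t + a (x t)) := by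
  obtain ⟨R, hR⟩ := s10_pinv (s10D T q)
  let A : (ℝ → ℝ) →ₗ[ℝ] (Set.Icc 0 T → ℝ) :=
    { toFun := fun a t => -a (x t)
      map_add' := fun a b => by ext t; simp; ring
      map_smul' := fun c a => by ext t; simp }
  refine ⟨s10H.subtype ∘ₗ R ∘ₗ A, fun a ha => ?_⟩
  have hmem := (R (A a)).2
  refine ⟨hmem.1, hmem.2.1, hmem.2.2, ?_⟩
  obtain ⟨d, hd⟩ := (isCompact_Icc (a := (0 : ℝ)) (b := T)).exists_bound_of_continuousOn
    (ha.comp hx).continuousOn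
  have hd0 : 0 ≤ d := (norm_nonneg _).trans (hd 0 ⟨le_rfl, hT.le⟩)
  obtain ⟨y, hy, hy0, hy1, hyt⟩ := s10_exist hT (fun t w => -(q t * w + a (x t)))
    (by simp only [Function.uncurry_def]; fun_prop)
    (fun t ht w u => by
      have : -(q t * w + a (x t)) - -(q t * u + a (x t)) = -(q t * (w - u)) := by ring
      rw [this, abs_neg, abs_mul]
      exact mul_le_mul_of_nonneg_right (hq5 t ht) (abs_nonneg _)) hd0
    (fun t ht w => by
      rw [abs_neg]
      refine (abs_add_le _ _).trans ?_
      rw [abs_mul]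
      exact add_le_add (mul_le_mul_of_nonneg_right (hq5 t ht) (abs_nonneg _)) (hd t ht)) 0
  have hAy : A a = s10D T q ⟨y, hy, hy0, hy1⟩ := by
    ext t
    change -a (x t) = deriv (deriv y) t + q t * y t
    rw [hyt t t.2]; ring
  intro t ht
  have h1 : s10D T q (R (A a)) = A a := by rw [hAy, hR]
  have h2 : deriv (deriv (R (A a)).1) t + q t * (R (A a)).1 t = -a (x t) :=
    congrFun h1 ⟨t, ht⟩
  change deriv (deriv (R (A a)).1) t = -(q t * (R (A a)).1 t + a (x t))
  linarith

lemma s10_full {T : ℝ} (hT : 0 < T) {y : ℝ → ℝ} {d : ℝ} (hd : 0 ≤ d)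
    (hy : ContDiff ℝ 2 y) (h0 : y 0 = 0) (h1 : deriv y 0 = 0)
    (hb : ∀ t ∈ Set.Icc 0 T, |deriv (deriv y) t| ≤ 5 * |y t| + d) :
    C2Norm y (Set.Icc 0 T) ≤ (5 * exp (5 * T) + 1) * d := by
  refine s10_norm_le hT.le fun t ht => ?_
  have := s10_gron hd le_rfl hy (by simp [h0]) (by simp [h1]) hb t ht
  rw [zero_add] at this
  have h2 := hb t ht
  have h3 : 0 ≤ d * exp (5 * T) := by positivity
  refine ⟨?_, ?_, ?_⟩ <;> nlinarith [this.1, this.2]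

/-- existence, uniqueness and Fréchet differentiability (with the
stated bound on the derivative) of the solution map `ε ↦ x_ε(v;·)` of
`ẍ + x + ℓx³ + ε(x) = 0`, `x(0) = 0`, `ẋ(0) = v`, on `[0,T]`. -/
theorem statement10 (l : ℝ) (hl : l = 1 ∨ l = -1) (T : ℝ) (hT : 0 < T) :
    ∃ δ₁ > (0 : ℝ), ∃ δ₂ > (0 : ℝ), ∃ δ₃ > (0 : ℝ), ∃ K > (0 : ℝ),
      ∃ sol : (ℝ → ℝ) → ℝ → (ℝ → ℝ),
        ∀ v : ℝ, |v| < δ₁ → ∀ e : ℝ → ℝ, AdmissiblePerturbation δ₂ δ₃ e →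
          -- existence:
          IsPerturbedSolution l e v δ₂ T (sol e v) ∧
          -- uniqueness:
          (∀ y : ℝ → ℝ, IsPerturbedSolution l e v δ₂ T y →
            Set.EqOn y (sol e v) (Set.Icc 0 T)) ∧
          -- Fréchet differentiability of `ε ↦ x_ε(v;·)` with derivative `L`:
          (∃ L : (ℝ → ℝ) → (ℝ → ℝ),
            (∀ α β : ℝ → ℝ, L (α + β) = L α + L β) ∧
            (∀ (c : ℝ) (α : ℝ → ℝ), L (c • α) = c • L α) ∧
            -- the bound `‖(δx_ε/δε)·α‖_{C²([0,T])} ≤ K sup_{t∈[0,T]} |α(x_ε(v;t))|`: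
            (∀ α : ℝ → ℝ, ContDiff ℝ 2 α →
              C2Norm (L α) (Set.Icc 0 T)
                ≤ K * sSup ((fun t => |α (sol e v t)|) '' Set.Icc (0 : ℝ) T)) ∧
            -- the first-order (little-o) approximation property:
            (∀ η > (0 : ℝ), ∃ ρ > (0 : ℝ), ∀ α : ℝ → ℝ, ContDiff ℝ 2 α → α 0 = 0 →
              C2Norm α (Set.Icc (-δ₂) δ₂) ≤ ρ → AdmissiblePerturbation δ₂ δ₃ (e + α) →
              C2Norm (sol (e + α) v - sol e v - L α) (Set.Icc 0 T)
                ≤ η * C2Norm α (Set.Icc (-δ₂) δ₂))) := by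
  have hl1 : |l| = 1 := by rcases hl with rfl | rfl <;> simp
  set E := exp (5 * T) with hE
  have hE0 : 0 < E := exp_pos _
  have hE1 : 1 ≤ E := one_le_exp (by positivity)
  classical
  refine ⟨exp (-(5 * T)), exp_pos _, 1, one_pos, 1, one_pos, 5 * E + 1, by positivity,
    fun e v => if h : ∃ y, IsPerturbedSolution l e v 1 T y then h.choose else 0, ?_⟩
  intro v hv
  set sol : (ℝ → ℝ) → ℝ → ℝ → ℝ :=
    fun e v => if h : ∃ y, IsPerturbedSolution l e v 1 T y then h.choose else 0 with hsol
  have hadm : ∀ e, AdmissiblePerturbation 1 1 e →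
      (∀ t ∈ Set.Icc (-1 : ℝ) 1, |deriv e t| ≤ 1) ∧
      (∀ t ∈ Set.Icc (-1 : ℝ) 1, |deriv (deriv e) t| ≤ 1) := fun e he =>
    ⟨fun t ht => ((s10_le_norm he.1 t ht).2.1).trans he.2.2.le,
     fun t ht => ((s10_le_norm he.1 t ht).2.2).trans he.2.2.le⟩
  have hsp : ∀ e, AdmissiblePerturbation 1 1 e → IsPerturbedSolution l e v 1 T (sol e v) := by
    intro e he
    have h := s10_sol_exists hl1 hT he.1 he.2.1 (hadm e he).1 hv
    simp only [hsol, dif_pos h]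
    exact h.choose_spec
  intro e he
  have hx := hsp e he
  obtain ⟨hN1, hN2⟩ := hadm e he
  change IsPerturbedSolution l e v 1 T (sol e v) ∧ _
  refine ⟨hx, ?_, ?_⟩
  · intro y hy t ht
    have := s10_diff hl1 (a := 0) he.1 hN1 le_rfl (by simp) hx (by simpa using hy) t ht
    rw [zero_mul] at this
    exact sub_eq_zero.1 (abs_nonpos_iff.1 this)
  set x := sol e v with hxdef
  obtain ⟨hx2, hx0, hx1, hxt⟩ := hx
  obtain ⟨cx0, cx1, _⟩ := s10_c2 hx2
  have hq5 : ∀ t ∈ Set.Icc 0 T, |1 + 3 * l * x t ^ 2 + deriv e (x t)| ≤ 5 := fun t ht =>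
    s10_q hl1 hN1 (hxt t ht).1
  obtain ⟨L, hL⟩ := s10_L hT (q := fun t => 1 + 3 * l * x t ^ 2 + deriv e (x t)) (x := x)
    (by
      have := cx0.continuous
      have := (s10_c2 he.1).2.1.continuous
      fun_prop) cx0.continuous hq5
  refine ⟨L, L.map_add, L.map_smul, ?_, ?_⟩
  · intro a ha
    obtain ⟨h2, h0, h1, ht⟩ := hL a ha.continuous
    have hbd : BddAbove ((fun t => |a (x t)|) '' Set.Icc (0 : ℝ) T) :=
      isCompact_Icc.bddAbove_image (ha.continuous.comp cx0.continuous).abs.continuousOn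
    have hS : ∀ t ∈ Set.Icc 0 T,
        |a (x t)| ≤ sSup ((fun t => |a (x t)|) '' Set.Icc (0 : ℝ) T) := fun t ht =>
      le_csSup hbd (Set.mem_image_of_mem (fun t => |a (x t)|) ht)
    refine s10_full hT ((abs_nonneg _).trans (hS 0 ⟨le_rfl, hT.le⟩)) h2 h0 h1 fun t ht' => ?_
    rw [ht t ht', abs_neg]
    refine (abs_add_le _ _).trans ?_
    rw [abs_mul]
    exact add_le_add (mul_le_mul_of_nonneg_right (hq5 t ht') (abs_nonneg _)) (hS t ht')
  · intro η hη
    refine ⟨η / ((5 * E + 1) * (5 * E ^ 2)), by positivity, ?_⟩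
    intro a ha ha0 haρ hadm2
    obtain ⟨h2, h0, h1, hht⟩ := hL a ha.continuous
    set N := C2Norm a (Set.Icc (-1) 1) with hNdef
    have haN := s10_le_norm (a := -1) (b := 1) ha
    have hN0 : 0 ≤ N := (abs_nonneg _).trans (haN 0 (by simp)).1
    have hz := hsp (e + a) hadm2
    change C2Norm (sol (e + a) v - x - L a) (Set.Icc 0 T) ≤ η * N
    set z := sol (e + a) v with hzdef
    have hw := s10_diff hl1 he.1 hN1 hN0 (fun t ht => (haN t ht).1)
      ⟨hx2, hx0, hx1, hxt⟩ hz
    obtain ⟨hz2, hz0, hz1, hzt⟩ := hz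
    obtain ⟨cz0, cz1, _⟩ := s10_c2 hz2
    obtain ⟨ch0, ch1, _⟩ := s10_c2 h2
    have hd : deriv (z - x - L a) = deriv z - deriv x - deriv (L a) := funext fun t => by
      rw [deriv_sub ((cz0 t).sub (cx0 t)) (ch0 t), deriv_sub (cz0 t) (cx0 t)]; rfl
    have hdd : deriv (deriv (z - x - L a)) =
        deriv (deriv z) - deriv (deriv x) - deriv (deriv (L a)) := by
      rw [hd]
      exact funext fun t => by
        rw [deriv_sub ((cz1 t).sub (cx1 t)) (ch1 t), deriv_sub (cz1 t) (cx1 t)]; rfl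
    have hmain : C2Norm (z - x - L a) (Set.Icc 0 T) ≤ (5 * E + 1) * (5 * E ^ 2 * N ^ 2) := by
      refine s10_full hT (by positivity) ((hz2.sub hx2).sub h2) ?_ ?_ ?_
      · simp [hz0, hx0, h0]
      · rw [hd]; simp [hz1, hx1, h1]
      intro t ht
      have ex := hxt t ht
      have ez := hzt t ht
      have eh := hht t ht
      have ew := hw t ht
      have eT := s10_taylor he.1 hN2 ex.1 ez.1
      have eA := s10_lip ha (fun t ht => (haN t ht).2.1) ex.1 ez.1
      have eq5 := hq5 t ht
      have ez2 : deriv (deriv z) t + z t + l * z t ^ 3 + (e (z t) + a (z t)) = 0 := ez.2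
      have key : deriv (deriv (z - x - L a)) t =
          -((1 + 3 * l * x t ^ 2 + deriv e (x t)) * (z t - x t - L a t))
          - l * ((z t - x t) ^ 2 * (z t + 2 * x t))
          - (e (z t) - e (x t) - deriv e (x t) * (z t - x t)) - (a (z t) - a (x t)) := by
        rw [hdd]
        simp only [Pi.sub_apply]
        rw [eh]
        linear_combination ez2 - ex.2
      rw [key]
      change _ ≤ 5 * |z t - x t - L a t| + _
      have b1 : |-((1 + 3 * l * x t ^ 2 + deriv e (x t)) * (z t - x t - L a t))|
          ≤ 5 * |z t - x t - L a t| := by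
        rw [abs_neg, abs_mul]
        exact mul_le_mul_of_nonneg_right eq5 (abs_nonneg _)
      have hw2 : |z t - x t| * |z t - x t| ≤ (N * E) * (N * E) :=
        mul_le_mul ew ew (abs_nonneg _) (by positivity)
      have b2 : |l * ((z t - x t) ^ 2 * (z t + 2 * x t))| ≤ 3 * ((N * E) * (N * E)) := by
        rw [abs_mul, hl1, one_mul, abs_mul, abs_pow, pow_two, mul_comm]
        have : |z t + 2 * x t| ≤ 3 := by
          have := abs_le.1 ex.1
          have := abs_le.1 ez.1
          rw [abs_le]; constructor <;> linarith
        exact mul_le_mul this hw2 (by positivity) (by norm_num)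
      have b3 : |a (z t) - a (x t)| ≤ (N * E) * (N * E) := by
        refine eA.trans ((mul_le_mul_of_nonneg_left ew hN0).trans ?_)
        refine mul_le_mul_of_nonneg_right ?_ (by positivity)
        nlinarith
      have tri : ∀ p q r s : ℝ, |p - q - r - s| ≤ |p| + |q| + |r| + |s| := fun p q r s => by
        have := abs_sub (p - q - r) s
        have := abs_sub (p - q) r
        have := abs_sub p q
        linarith
      refine (tri _ _ _ _).trans ?_
      have : 5 * E ^ 2 * N ^ 2 = 5 * ((N * E) * (N * E)) := by ring
      rw [this]
      linarith
    refine hmain.trans ?_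
    have h3 : N * ((5 * E + 1) * (5 * E ^ 2)) ≤ η := (le_div_iff₀ (by positivity)).1 haρ
    have := mul_le_mul_of_nonneg_right h3 hN0
    nlinarith
end

section
/- Let V be a C⁵ perturbed quartic potential with ℓ ∈ {−1,1} equal to the sign of V⁽⁴⁾(0). For every T > 0 there exist v₀ > 0 and C > 0 such that for all t ∈ [0,T] and all |v| < v₀, the solution x(v;t) of ẍ = −V'(x) with x(v;0) = 0, ẋ(v;0) = v satisfies |x(v;t) − v sin(e_ℓ(v)t) + (1/8)v³ g_ℓ(e_ℓ(v)t)| ≤ C v⁴; in particular |x(v;t) − v sin t| ≤ C(|v|³|t| + v⁴). -/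
open Real Filter Asymptotics Topology

/-- `e_ℓ(v) = 1 + j_ℓ v²` with `j₁ = 1/2`, `j₋₁ = -1/4`. -/
noncomputable def eCoef (l v : ℝ) : ℝ :=
  1 + (if l = 1 then (1 : ℝ) / 2 else -(1 : ℝ) / 4) * v ^ 2

/-- `g_ℓ(t) = t cos t + ℓ(sin t cos²t + 2 sin t)`. -/
noncomputable def gFun (l t : ℝ) : ℝ :=
  t * Real.cos t + l * (Real.sin t * Real.cos t ^ 2 + 2 * Real.sin t)

/-- Duhamel estimate for the harmonic oscillator. -/
lemma duhamel_bound (h h1 h2 : ℝ → ℝ) (T R : ℝ) (hd : ∀ t, HasDerivAt h (h1 t) t)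
    (hd1 : ∀ t, HasDerivAt h1 (h2 t) t) (h0 : h 0 = 0) (h10 : h1 0 = 0)
    (hR : ∀ t ∈ Set.Icc (0 : ℝ) T, |h2 t + h t| ≤ R) :
    ∀ t ∈ Set.Icc (0 : ℝ) T, |h t| ≤ R * t := by
  intro t ht
  have key := (convex_Icc (0 : ℝ) t).norm_image_sub_le_of_norm_hasDerivWithin_le
    (f := fun s => h s * Real.cos (t - s) + h1 s * Real.sin (t - s))
    (f' := fun s => (h2 s + h s) * Real.sin (t - s)) (C := R) (x := 0) (y := t)
    (fun s _ => by
      have e1 : HasDerivAt (fun s : ℝ => t - s) (-1) s := by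
        simpa using (hasDerivAt_id s).const_sub t
      have := ((hd s).mul e1.cos).add ((hd1 s).mul e1.sin)
      refine HasDerivAt.hasDerivWithinAt ?_
      refine HasDerivAt.congr_deriv this ?_
      ring)
    (fun s hs => by
      have h3 := hR s ⟨hs.1, hs.2.trans ht.2⟩
      rw [Real.norm_eq_abs, abs_mul]
      calc |h2 s + h s| * |Real.sin (t - s)| ≤ |h2 s + h s| * 1 := by
            gcongr; exact Real.abs_sin_le_one _
        _ ≤ R := by simpa using h3)
    ⟨le_refl _, ht.1⟩ ⟨ht.1, le_refl _⟩
  simpa [h0, h10, abs_of_nonneg ht.1] using key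

lemma sin_lip (a b : ℝ) : |Real.sin (a + b) - Real.sin a| ≤ |b| := by
  have := Real.abs_sin_sub_sin_le (a + b) a
  simpa using this

lemma cos_lip (a b : ℝ) : |Real.cos (a + b) - Real.cos a| ≤ |b| := by
  have := Real.abs_cos_sub_cos_le (a + b) a
  simpa using this

lemma sin_taylor (a b : ℝ) : |Real.sin (a + b) - Real.sin a - b * Real.cos a| ≤ b ^ 2 := by
  have key := (convex_uIcc (0 : ℝ) b).norm_image_sub_le_of_norm_hasDerivWithin_le
    (f := fun s => Real.sin (a + s) - s * Real.cos a)
    (f' := fun s => Real.cos (a + s) - Real.cos a) (C := |b|) (x := 0) (y := b)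
    (fun s _ => by
      have e1 : HasDerivAt (fun s : ℝ => a + s) 1 s := by
        simpa using (hasDerivAt_id s).const_add a
      have := e1.sin.sub ((hasDerivAt_id s).mul_const (Real.cos a))
      refine HasDerivAt.hasDerivWithinAt ?_
      refine HasDerivAt.congr_deriv this ?_
      simp)
    (fun s hs => by
      refine (cos_lip a s).trans ?_
      have := Set.abs_sub_left_of_mem_uIcc hs
      simpa using this)
    Set.left_mem_uIcc Set.right_mem_uIcc
  simp only [Real.norm_eq_abs, sub_zero, add_zero, zero_mul, abs_mul_abs_self] at key
  rw [show Real.sin (a + b) - Real.sin a - b * Real.cos a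
    = Real.sin (a + b) - b * Real.cos a - Real.sin a by ring, pow_two]
  exact key

/-- a priori bound from energy conservation -/
lemma apriori (V : ℝ → ℝ) (δ : ℝ) (hδ : 0 < δ)
    (hlow : ∀ y, |y| ≤ δ → y ^ 2 / 4 ≤ V y) (hV0 : V 0 = 0) (hVd : Differentiable ℝ V)
    (x x1 : ℝ → ℝ) (v : ℝ) (hd : ∀ t, HasDerivAt x (x1 t) t)
    (hd1 : ∀ t, HasDerivAt x1 (-(deriv V (x t))) t) (h0 : x 0 = 0) (h10 : x1 0 = v)
    (hv : 2 * |v| < δ) : ∀ t, 0 ≤ t → |x t| ≤ 2 * |v| := by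
  have hE : ∀ t, x1 t ^ 2 / 2 + V (x t) = v ^ 2 / 2 := by
    intro t
    have hder : ∀ s, HasDerivAt (fun s => x1 s ^ 2 / 2 + V (x s)) 0 s := by
      intro s
      have e1 := (((hd1 s).pow 2).div_const 2).add ((hVd (x s)).hasDerivAt.comp s (hd s))
      refine HasDerivAt.congr_deriv e1 ?_
      simp; ring
    have := is_const_of_deriv_eq_zero (fun s => (hder s).differentiableAt)
      (fun s => (hder s).deriv) t 0
    simpa [h0, h10, hV0] using this
  have hb : ∀ t, |x t| ≤ δ → |x t| ≤ 2 * |v| := by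
    intro t ht
    have h1 := hlow _ ht
    have h2 := hE t
    refine abs_le_of_sq_le_sq' ?_ (by positivity) |> abs_le.mpr
    rw [mul_pow, sq_abs]
    nlinarith [sq_nonneg (x1 t), sq_nonneg v]
  intro t ht
  apply hb
  by_contra hc
  push Not at hc
  have hcont : Continuous fun s => |x s| :=
    (continuous_iff_continuousAt.mpr fun s => (hd s).continuousAt).abs
  have := intermediate_value_Icc ht hcont.continuousOn
  obtain ⟨s, -, hs⟩ := this (show δ ∈ Set.Icc (|x 0|) (|x t|) by
    simp [h0, hδ.le, hc.le])
  have := hb s hs.le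
  simp only at hs
  linarith

noncomputable def yFun (l t : ℝ) : ℝ :=
  l * (3 / 8 * t * Real.cos t - 1 / 8 * (Real.sin t * Real.cos t ^ 2 + 2 * Real.sin t))

noncomputable def yFun1 (l t : ℝ) : ℝ :=
  l * (3 / 8 * (Real.cos t - t * Real.sin t)
    - 1 / 8 * (Real.cos t ^ 3 - 2 * Real.sin t ^ 2 * Real.cos t + 2 * Real.cos t))

lemma yFun_d (l t : ℝ) : HasDerivAt (yFun l) (yFun1 l t) t := by
  have s := Real.hasDerivAt_sin t
  have c := Real.hasDerivAt_cos t
  have := (((((hasDerivAt_id t).const_mul (3 / 8 : ℝ)).mul c).sub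
    (((s.mul (c.pow 2)).add (s.const_mul 2)).const_mul (1 / 8 : ℝ))).const_mul l)
  refine HasDerivAt.congr_deriv this ?_
  simp only [yFun1, id, Pi.pow_apply]; push_cast; ring

lemma yFun1_d (l t : ℝ) : HasDerivAt (yFun1 l) (- yFun l t - l * Real.sin t ^ 3) t := by
  have s := Real.hasDerivAt_sin t
  have c := Real.hasDerivAt_cos t
  have := (((c.sub ((hasDerivAt_id t).mul s)).const_mul (3 / 8 : ℝ)).sub
    ((((c.pow 3).sub (((s.pow 2).const_mul 2).mul c)).add (c.const_mul 2)).const_mul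
      (1 / 8 : ℝ))).const_mul l
  refine HasDerivAt.congr_deriv this ?_
  simp [yFun]
  have h : Real.cos t ^ 2 = 1 - Real.sin t ^ 2 := by
    have := Real.sin_sq_add_cos_sq t; linarith
  ring_nf
  simp only [h]
  ring

lemma g_lip (l t b T : ℝ) (hl : |l| ≤ 1) (ht : 0 ≤ t) (htT : t ≤ T) :
    |gFun l (t + b) - gFun l t| ≤ (T + 6) * |b| := by
  unfold gFun
  have hs := sin_lip t b
  have hc := cos_lip t b
  have c1 := Real.abs_cos_le_one t
  have c2 := Real.abs_cos_le_one (t + b)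
  have s1 := Real.abs_sin_le_one t
  set S := Real.sin t
  set C := Real.cos t
  set S' := Real.sin (t + b)
  set C' := Real.cos (t + b)
  have e : (t + b) * C' + l * (S' * C' ^ 2 + 2 * S') - (t * C + l * (S * C ^ 2 + 2 * S))
    = t * (C' - C) + b * C' + l * ((S' - S) * (C' ^ 2 + 2) + S * ((C' - C) * (C' + C))) := by ring
  rw [e]
  have b0 := abs_nonneg b
  have i1 : |t * (C' - C)| ≤ T * |b| := by
    rw [abs_mul, abs_of_nonneg ht]; gcongr; linarith
  have i2 : |b * C'| ≤ |b| * 1 := by rw [abs_mul]; gcongr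
  have i3 : |(S' - S) * (C' ^ 2 + 2)| ≤ |b| * 3 := by
    rw [abs_mul]
    gcongr
    rw [abs_of_nonneg (by positivity)]
    have : C' ^ 2 ≤ 1 := (sq_le_one_iff_abs_le_one _).mpr c2
    linarith
  have i4 : |S * ((C' - C) * (C' + C))| ≤ 1 * (|b| * 2) := by
    rw [abs_mul, abs_mul]
    gcongr
    exact (abs_add_le _ _).trans (by linarith)
  have i5 : |l * ((S' - S) * (C' ^ 2 + 2) + S * ((C' - C) * (C' + C)))| ≤ 1 * (|b| * 5) := by
    rw [abs_mul]
    gcongr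
    exact (abs_add_le _ _).trans (by linarith)
  have a1 := abs_add_le (t * (C' - C) + b * C')
    (l * ((S' - S) * (C' ^ 2 + 2) + S * ((C' - C) * (C' + C))))
  have a2 := abs_add_le (t * (C' - C)) (b * C')
  linarith

/-- comparison of the two approximations -/
lemma approx_cmp (l v t T : ℝ) (hl : l = 1 ∨ l = -1) (hv : |v| ≤ 1) (ht : 0 ≤ t) (htT : t ≤ T) :
    |v * Real.sin t + v ^ 3 * yFun l t
      - (v * Real.sin (eCoef l v * t) - 1 / 8 * v ^ 3 * gFun l (eCoef l v * t))|
      ≤ (T ^ 2 + (T + 6) * T) * v ^ 4 := by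
  have hT : 0 ≤ T := ht.trans htT
  obtain ⟨j, hj, he, hjl⟩ : ∃ j : ℝ, |j| ≤ 1 ∧ eCoef l v * t = t + j * v ^ 2 * t ∧
      j - 1 / 8 = 3 / 8 * l := by
    rcases hl with rfl | rfl
    · refine ⟨1 / 2, by norm_num [abs_le], ?_, by norm_num⟩
      simp [eCoef]; ring
    · refine ⟨-1 / 4, by norm_num [abs_le], ?_, by norm_num⟩
      unfold eCoef
      rw [if_neg (by norm_num)]; ring
  have hl1 : |l| ≤ 1 := by rcases hl with rfl | rfl <;> simp
  rw [he]
  have h1 := sin_taylor t (j * v ^ 2 * t)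
  have h2 := g_lip l t (j * v ^ 2 * t) T hl1 ht htT
  set b := j * v ^ 2 * t with hb
  have hb1 : |b| ≤ T * v ^ 2 := by
    rw [hb, abs_mul, abs_mul, abs_of_nonneg ht, abs_of_nonneg (sq_nonneg v)]
    calc |j| * v ^ 2 * t ≤ 1 * v ^ 2 * T := by gcongr
      _ = _ := by ring
  have hb2 : b ^ 2 ≤ T ^ 2 * v ^ 4 := by
    calc b ^ 2 = |b| ^ 2 := (sq_abs b).symm
      _ ≤ (T * v ^ 2) ^ 2 := by gcongr
      _ = _ := by ring
  have e : v * Real.sin t + v ^ 3 * yFun l t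
      - (v * Real.sin (t + b) - 1 / 8 * v ^ 3 * gFun l (t + b))
      = -(v * (Real.sin (t + b) - Real.sin t - b * Real.cos t))
        + 1 / 8 * v ^ 3 * (gFun l (t + b) - gFun l t) := by
    have hl' : l = 8 / 3 * (j - 1 / 8) := by linarith
    have : v ^ 3 * yFun l t + 1 / 8 * v ^ 3 * gFun l t = v * (b * Real.cos t) := by
      unfold yFun gFun
      rw [hb]
      linear_combination (-v ^ 3 * t * Real.cos t) * hjl
    linear_combination this
  rw [e]
  have i1 : |-(v * (Real.sin (t + b) - Real.sin t - b * Real.cos t))| ≤ 1 * (T ^ 2 * v ^ 4) := by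
    rw [abs_neg, abs_mul]; gcongr; linarith
  have i2 : |1 / 8 * v ^ 3 * (gFun l (t + b) - gFun l t)| ≤ 1 * v ^ 2 * ((T + 6) * (T * v ^ 2)) := by
    rw [abs_mul]
    gcongr
    · rw [abs_mul, abs_pow, abs_of_pos (by norm_num : (0 : ℝ) < 1 / 8), ← sq_abs v]
      nlinarith [abs_nonneg v, sq_nonneg |v|, mul_nonneg (sq_nonneg |v|) (sub_nonneg.mpr hv)]
    · refine h2.trans ?_
      gcongr
  have := abs_add_le (-(v * (Real.sin (t + b) - Real.sin t - b * Real.cos t)))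
    (1 / 8 * v ^ 3 * (gFun l (t + b) - gFun l t))
  nlinarith

lemma local_bounds (V f : ℝ → ℝ) (l : ℝ) (hV : PerturbedQuartic V f l) :
    ∃ δ > (0 : ℝ), δ ≤ 1 ∧ ∃ K > (0 : ℝ), Differentiable ℝ V ∧ V 0 = 0 ∧
      (∀ y, |y| ≤ δ → y ^ 2 / 4 ≤ V y) ∧
      (∀ y, deriv V y = y + l * y ^ 3 + deriv f y) ∧
      (∀ y, |y| ≤ δ → |deriv f y| ≤ K * y ^ 4) := by
  obtain ⟨hl, hf, hVf, hO⟩ := hV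
  have hfd : Differentiable ℝ f := hf.differentiable (by norm_num)
  have hd : ∀ y, HasDerivAt V (y + l * y ^ 3 + deriv f y) y := by
    intro y
    have e : V = fun y => y ^ 2 / 2 + l * y ^ 4 / 4 + f y := funext hVf
    rw [e]
    have := ((((hasDerivAt_id y).pow 2).div_const 2).add
      ((((hasDerivAt_id y).pow 4).const_mul l).div_const 4)).add (hfd y).hasDerivAt
    refine HasDerivAt.congr_deriv this ?_
    simp; ring
  obtain ⟨K0, hK0, h0⟩ := (hO 0 (by norm_num)).exists_pos
  obtain ⟨K1, hK1, h1⟩ := (hO 1 (by norm_num)).exists_pos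
  have h01 := (h0.bound.and h1.bound)
  obtain ⟨ε, hε, hb⟩ := Metric.eventually_nhds_iff.mp h01
  simp only [iteratedDeriv_zero, iteratedDeriv_one, Real.norm_eq_abs, abs_pow, abs_abs,
    Real.dist_eq, sub_zero] at hb
  have hf0 : f 0 = 0 := by
    have := (@hb 0 (by simpa using hε)).1
    simpa using this
  refine ⟨min (ε / 2) (min (1 / 2) (1 / (2 * K0))), by positivity,
    (min_le_right _ _).trans ((min_le_left _ _).trans (by norm_num)), K1, hK1,
    fun y => (hd y).differentiableAt, by simp [hVf, hf0], ?_, fun y => (hd y).deriv, ?_⟩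
  · intro y hy
    simp only [le_min_iff] at hy
    obtain ⟨hy1, hy2, hy3⟩ := hy
    have hh := (@hb y (by linarith)).1
    rw [hVf]
    have k1 : |y| ^ 2 ≤ 1 / 4 := by nlinarith [abs_nonneg y]
    have k2 : K0 * |y| ≤ 1 / 2 := by
      rw [le_div_iff₀ (by positivity)] at hy3; linarith
    have k3 : |f y| ≤ 1 / 8 * y ^ 2 := by
      calc |f y| ≤ K0 * |y| ^ 5 := hh
        _ = (K0 * |y|) * |y| ^ 2 * |y| ^ 2 := by ring
        _ ≤ (1 / 2) * (1 / 4) * |y| ^ 2 := by gcongr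
        _ = _ := by rw [sq_abs]; ring
    have k4 : y ^ 4 ≤ 1 / 4 * y ^ 2 := by
      calc y ^ 4 = |y| ^ 2 * y ^ 2 := by rw [sq_abs]; ring
        _ ≤ _ := by gcongr
    have k5 := (abs_le.mp k3).1
    rcases hl with rfl | rfl <;> nlinarith [sq_nonneg y, sq_nonneg (y ^ 2)]
  · intro y hy
    simp only [le_min_iff] at hy
    have hh := (@hb y (by linarith [hy.1])).2
    simp only [show 5 - 1 = 4 by norm_num] at hh
    rwa [Even.pow_abs (by decide)] at hh

/-- estimates for the solutions `x(v;t)` of `ẍ = -V'(x)`,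
`x(0) = 0`, `ẋ(0) = v`, for a perturbed quartic potential `V`, on `[0,T]`. -/
theorem statement12 (V f : ℝ → ℝ) (l : ℝ) (hV : PerturbedQuartic V f l)
    (v₁ : ℝ) (hv₁ : 0 < v₁) (x : ℝ → ℝ → ℝ)
    (hx : ∀ v : ℝ, |v| ≤ v₁ → ContDiff ℝ 2 (x v) ∧ x v 0 = 0 ∧ deriv (x v) 0 = v ∧
      ∀ t : ℝ, deriv (deriv (x v)) t = -(deriv V (x v t))) :
    ∀ T : ℝ, 0 < T → ∃ v₀ > (0 : ℝ), v₀ ≤ v₁ ∧ ∃ C > (0 : ℝ),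
      ∀ v : ℝ, |v| < v₀ → ∀ t ∈ Set.Icc (0 : ℝ) T,
        |x v t - v * Real.sin (eCoef l v * t) + 1 / 8 * v ^ 3 * gFun l (eCoef l v * t)|
            ≤ C * v ^ 4 ∧
        |x v t - v * Real.sin t| ≤ C * (|v| ^ 3 * |t| + v ^ 4) := by
  intro T hT
  obtain ⟨δ, hδ, hδ1, K, hK, hVd, hV0, hlow, hdV, hfb⟩ := local_bounds V f l hV
  have hl := hV.1
  have hl1 : |l| ≤ 1 := by rcases hl with rfl | rfl <;> simp
  set A : ℝ := 8 + 16 * K with hA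
  set B : ℝ := 7 * (A * T) + 16 * K with hB
  set D : ℝ := B * T + (T ^ 2 + (T + 6) * T) with hD
  have hApos : 0 < A := by positivity
  have hDpos : 0 < D := by positivity
  refine ⟨min v₁ (δ / 2), by positivity, min_le_left _ _, A + D, by positivity, ?_⟩
  intro v hv
  rw [lt_min_iff] at hv
  obtain ⟨hvv, hvδ⟩ := hv
  have hv1 : |v| ≤ 1 := by linarith
  have a0 := abs_nonneg v
  obtain ⟨hC, hx0, hx1, hode⟩ := hx v hvv.le
  have hd : ∀ t, HasDerivAt (x v) (deriv (x v) t) t := fun t =>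
    (hC.differentiable (by norm_num) t).hasDerivAt
  have hd1 : ∀ t, HasDerivAt (deriv (x v)) (-(deriv V (x v t))) t := by
    intro t
    rw [← hode t]
    have : Differentiable ℝ (deriv (x v)) :=
      ((contDiff_succ_iff_deriv (n := 1)).mp hC).2.2.differentiable (by norm_num)
    exact (this t).hasDerivAt
  have hap := apriori V δ hδ hlow hV0 hVd (x v) (deriv (x v)) v hd hd1 hx0 hx1 (by linarith)
  have v4 : v ^ 4 = |v| ^ 4 := (Even.pow_abs (by decide) v).symm
  have hff : ∀ t, 0 ≤ t → |deriv f (x v t)| ≤ 16 * K * |v| ^ 4 := by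
    intro t ht
    have h := hap t ht
    calc |deriv f (x v t)| ≤ K * x v t ^ 4 := hfb _ (by linarith)
      _ = K * |x v t| ^ 4 := by rw [Even.pow_abs (by decide)]
      _ ≤ K * (2 * |v|) ^ 4 := by gcongr
      _ = _ := by ring
  have hu : ∀ t ∈ Set.Icc (0 : ℝ) T, |x v t - v * Real.sin t| ≤ (A * |v| ^ 3) * t := by
    refine duhamel_bound (fun t => x v t - v * Real.sin t)
      (fun t => deriv (x v) t - v * Real.cos t)
      (fun t => -(deriv V (x v t)) - v * (-Real.sin t)) T (A * |v| ^ 3)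
      (fun t => (hd t).sub ((Real.hasDerivAt_sin t).const_mul v))
      (fun t => (hd1 t).sub ((Real.hasDerivAt_cos t).const_mul v))
      (by simp [hx0]) (by simp [hx1]) ?_
    intro t ht
    have h := hap t ht.1
    have h' := hff t ht.1
    simp only [hdV]
    have e : -(x v t + l * x v t ^ 3 + deriv f (x v t)) - v * -Real.sin t
        + (x v t - v * Real.sin t) = -(l * x v t ^ 3 + deriv f (x v t)) := by ring
    rw [e, abs_neg]
    have i1 : |l * x v t ^ 3| ≤ 1 * (2 * |v|) ^ 3 := by
      rw [abs_mul, abs_pow]; gcongr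
    have i2 : |v| ^ 4 ≤ |v| ^ 3 := pow_le_pow_of_le_one a0 hv1 (by norm_num)
    have i3 := mul_le_mul_of_nonneg_left i2 (by positivity : 0 ≤ 16 * K)
    calc _ ≤ _ := abs_add_le _ _
      _ ≤ 1 * (2 * |v|) ^ 3 + 16 * K * |v| ^ 3 := by linarith
      _ = A * |v| ^ 3 := by rw [hA]; ring
  have hw : ∀ t ∈ Set.Icc (0 : ℝ) T,
      |x v t - v * Real.sin t - v ^ 3 * yFun l t| ≤ (B * |v| ^ 4) * t := by
    refine duhamel_bound (fun t => x v t - v * Real.sin t - v ^ 3 * yFun l t)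
      (fun t => deriv (x v) t - v * Real.cos t - v ^ 3 * yFun1 l t)
      (fun t => -(deriv V (x v t)) - v * (-Real.sin t)
        - v ^ 3 * (- yFun l t - l * Real.sin t ^ 3)) T (B * |v| ^ 4)
      (fun t => ((hd t).sub ((Real.hasDerivAt_sin t).const_mul v)).sub
        ((yFun_d l t).const_mul _))
      (fun t => ((hd1 t).sub ((Real.hasDerivAt_cos t).const_mul v)).sub
        ((yFun1_d l t).const_mul _))
      (by simp [hx0, yFun]) (by simp [hx1, yFun1]; norm_num) ?_
    intro t ht
    have h := hap t ht.1
    have h' := hff t ht.1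
    have h'' := hu t ht
    simp only [hdV]
    set X := x v t
    set s := Real.sin t with hs
    have hs1 : |s| ≤ 1 := Real.abs_sin_le_one t
    have e : -(X + l * X ^ 3 + deriv f X) - v * -s - v ^ 3 * (-yFun l t - l * s ^ 3)
        + (X - v * s - v ^ 3 * yFun l t)
        = -(l * ((X - v * s) * (X ^ 2 + X * (v * s) + (v * s) ^ 2)) + deriv f X) := by ring
    rw [e, abs_neg]
    have hvs : |v * s| ≤ |v| := by
      rw [abs_mul]; exact mul_le_of_le_one_right a0 hs1
    have i0 : |X ^ 2 + X * (v * s) + (v * s) ^ 2| ≤ 7 * |v| ^ 2 := by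
      have j1 : |X ^ 2| ≤ (2 * |v|) ^ 2 := by rw [abs_pow]; gcongr
      have j2 : |X * (v * s)| ≤ (2 * |v|) * |v| := by rw [abs_mul]; gcongr
      have j3 : |(v * s) ^ 2| ≤ |v| ^ 2 := by rw [abs_pow]; gcongr
      have := abs_add_le (X ^ 2 + X * (v * s)) ((v * s) ^ 2)
      have := abs_add_le (X ^ 2) (X * (v * s))
      nlinarith
    have i1 : |l * ((X - v * s) * (X ^ 2 + X * (v * s) + (v * s) ^ 2))|
        ≤ 1 * ((A * |v| ^ 3 * T) * (7 * |v| ^ 2)) := by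
      rw [abs_mul, abs_mul]
      gcongr
      refine h''.trans ?_
      gcongr
      exact ht.2
    have i2 : |v| ^ 5 ≤ |v| ^ 4 := pow_le_pow_of_le_one a0 hv1 (by norm_num)
    have i3 := mul_le_mul_of_nonneg_left i2 (by positivity : 0 ≤ 7 * (A * T))
    calc _ ≤ _ := abs_add_le _ _
      _ ≤ 7 * (A * T) * |v| ^ 4 + 16 * K * |v| ^ 4 := by nlinarith
      _ = B * |v| ^ 4 := by rw [hB]; ring
  intro t ht
  have p4 : 0 ≤ v ^ 4 := by rw [v4]; positivity
  constructor
  · have h1 := approx_cmp l v t T hl hv1 ht.1 ht.2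
    have h2 := hw t ht
    rw [← v4] at h2
    have h3 : B * v ^ 4 * t ≤ B * v ^ 4 * T := by
      gcongr
      exact ht.2
    have h4 := abs_add_le (x v t - v * Real.sin t - v ^ 3 * yFun l t)
      (v * Real.sin t + v ^ 3 * yFun l t
      - (v * Real.sin (eCoef l v * t) - 1 / 8 * v ^ 3 * gFun l (eCoef l v * t)))
    rw [show x v t - v * Real.sin t - v ^ 3 * yFun l t +
      (v * Real.sin t + v ^ 3 * yFun l t
      - (v * Real.sin (eCoef l v * t) - 1 / 8 * v ^ 3 * gFun l (eCoef l v * t)))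
      = x v t - v * Real.sin (eCoef l v * t) + 1 / 8 * v ^ 3 * gFun l (eCoef l v * t) by ring] at h4
    have h5 : D * v ^ 4 = B * v ^ 4 * T + (T ^ 2 + (T + 6) * T) * v ^ 4 := by rw [hD]; ring
    have h6 : 0 ≤ A * v ^ 4 := by positivity
    linarith
  · have h1 := hu t ht
    rw [abs_of_nonneg ht.1]
    have h2 : 0 ≤ |v| ^ 3 * t := mul_nonneg (by positivity) ht.1
    have h3 : 0 ≤ D * (|v| ^ 3 * t) := by positivity
    have h4 : 0 ≤ (A + D) * v ^ 4 := by positivity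
    nlinarith
end

section
/- Fix ℓ ∈ {−1,1} and let V_ℓ(x) = x²/2 + ℓx⁴/4. For small v ≠ 0 define x_ℓ^M(v) = (−ℓ + ℓ(1+2ℓv²)^{1/2})^{1/2} and the period map T_ℓ(v) = 2√2 ∫₀^{x_ℓ^M(v)} (v²/2 − V_ℓ(x))^{−1/2} dx, with T_ℓ(0) = 2π. Then there exist v₀ > 0 and C > 0 such that for all |v| < v₀: |T_ℓ(v) − 2π + (3π/4)ℓv²| ≤ Cv⁴. -/
open Real

/-- The quartic potential `V_ℓ(x) = x²/2 + ℓx⁴/4`. -/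
noncomputable def Vquart (l y : ℝ) : ℝ := y ^ 2 / 2 + l * y ^ 4 / 4

/-- `x_ℓ^M(v) = (-ℓ + ℓ(1+2ℓv²)^{1/2})^{1/2}`, the positive solution of `V_ℓ(x) = v²/2`. -/
noncomputable def xMax (l v : ℝ) : ℝ := Real.sqrt (-l + l * Real.sqrt (1 + 2 * l * v ^ 2))

/-- The period map of the quartic potential:
`T_ℓ(v) = 2√2 ∫₀^{x_ℓ^M(v)} (v²/2 - V_ℓ(x))^{-1/2} dx` for `v ≠ 0`, `T_ℓ(0) = 2π`. -/
noncomputable def periodQuart (l v : ℝ) : ℝ :=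
  if v = 0 then 2 * Real.pi
  else 2 * Real.sqrt 2 * ∫ x in (0 : ℝ)..(xMax l v), (Real.sqrt (v ^ 2 / 2 - Vquart l x))⁻¹

lemma aux_xMax (l v : ℝ) (hl : l = 1 ∨ l = -1) (hv : |v| < 1 / 2) (hv0 : v ≠ 0) :
    0 < xMax l v ∧ v ^ 2 = xMax l v ^ 2 + l * (xMax l v ^ 2) ^ 2 / 2 ∧
      xMax l v ^ 2 ≤ 2 * v ^ 2 ∧ xMax l v ^ 2 ≤ 1 / 2 := by
  have hv2 : 0 < v ^ 2 := by positivity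
  have hv3 : v ^ 2 < 1 / 4 := by
    have := abs_lt.mp hv
    nlinarith
  have hs0 := Real.sqrt_nonneg (1 + 2 * l * v ^ 2)
  have hs : Real.sqrt (1 + 2 * l * v ^ 2) ^ 2 = 1 + 2 * l * v ^ 2 :=
    Real.sq_sqrt (by rcases hl with rfl | rfl <;> linarith)
  set s := Real.sqrt (1 + 2 * l * v ^ 2) with hsdef
  have hA : 0 < -l + l * s := by
    rcases hl with rfl | rfl <;> nlinarith
  have hx : xMax l v ^ 2 = -l + l * s := by
    unfold xMax
    rw [← hsdef]
    exact Real.sq_sqrt hA.le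
  refine ⟨Real.sqrt_pos.mpr hA, ?_, ?_, ?_⟩ <;> rw [hx] <;>
    rcases hl with rfl | rfl <;> nlinarith

lemma aux_taylor (u : ℝ) (hu : |u| ≤ 1 / 2) :
    |(Real.sqrt (1 + u))⁻¹ - (1 - u / 2)| ≤ u ^ 2 := by
  have h := abs_le.mp hu
  have hs0 := Real.sqrt_nonneg (1 + u)
  have hs : Real.sqrt (1 + u) ^ 2 = 1 + u := Real.sq_sqrt (by linarith)
  set w := Real.sqrt (1 + u)
  have hw : 0.7 ≤ w := by nlinarith
  have hu' : u = w ^ 2 - 1 := by linarith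
  have e : w⁻¹ - (1 - u / 2) = (w - 1) ^ 2 * ((w + 2) / (2 * w)) := by
    rw [hu']
    field_simp
    ring
  rw [e, abs_of_nonneg (by positivity), hu']
  have : (w + 2) / (2 * w) ≤ (w + 1) ^ 2 := by
    rw [div_le_iff₀ (by positivity)]
    nlinarith [mul_nonneg (sub_nonneg.mpr hw) hs0, mul_nonneg (mul_nonneg (sub_nonneg.mpr hw) hs0) hs0]
  calc _ ≤ (w - 1) ^ 2 * (w + 1) ^ 2 := by gcongr
    _ = _ := by ring

lemma aux_image (a : ℝ) (ha : 0 < a) :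
    (fun t => a * Real.sin t) '' Set.Ioo 0 (π / 2) = Set.Ioo 0 a := by
  ext x
  constructor
  · rintro ⟨t, ⟨h0, h1⟩, rfl⟩
    have hs : 0 < Real.sin t := Real.sin_pos_of_pos_of_lt_pi h0 (by linarith [Real.pi_pos])
    have hc : 0 < Real.cos t := Real.cos_pos_of_mem_Ioo ⟨by linarith, h1⟩
    have : Real.sin t < 1 := by nlinarith [Real.sin_sq_add_cos_sq t]
    constructor
    · show 0 < a * Real.sin t
      positivity
    · show a * Real.sin t < a
      nlinarith
  · rintro ⟨h0, h1⟩
    have h2 : 0 < x / a := by positivity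
    have h3 : x / a < 1 := (div_lt_one ha).mpr h1
    refine ⟨Real.arcsin (x / a), ⟨Real.arcsin_pos.mpr h2, Real.arcsin_lt_pi_div_two.mpr h3⟩, ?_⟩
    show a * Real.sin (Real.arcsin (x / a)) = x
    rw [Real.sin_arcsin (by linarith) h3.le]
    field_simp

lemma aux_u (l A t : ℝ) (hl : l = 1 ∨ l = -1) (hA : 0 < A) :
    |l * A * (1 + Real.sin t ^ 2) / 2| ≤ A := by
  have := Real.sin_sq_le_one t
  have := sq_nonneg (Real.sin t)
  rw [abs_le]
  rcases hl with rfl | rfl <;> constructor <;> nlinarith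

lemma aux_cov (l v a : ℝ) (hl : l = 1 ∨ l = -1) (ha : 0 < a) (ha2 : a ^ 2 ≤ 1 / 2)
    (hva : v ^ 2 = a ^ 2 + l * (a ^ 2) ^ 2 / 2) :
    ∫ x in (0 : ℝ)..a, (Real.sqrt (v ^ 2 / 2 - Vquart l x))⁻¹ =
      Real.sqrt 2 * ∫ t in (0 : ℝ)..(π / 2),
        (Real.sqrt (1 + l * a ^ 2 * (1 + Real.sin t ^ 2) / 2))⁻¹ := by
  rw [← intervalIntegral.integral_const_mul, intervalIntegral.integral_of_le ha.le,
    intervalIntegral.integral_of_le (by positivity),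
    MeasureTheory.integral_Ioc_eq_integral_Ioo, MeasureTheory.integral_Ioc_eq_integral_Ioo,
    ← aux_image a ha,
    MeasureTheory.integral_image_eq_integral_abs_deriv_smul (f' := fun t => a * Real.cos t)
      measurableSet_Ioo
      (fun t _ => ((Real.hasDerivAt_sin t).const_mul a).hasDerivWithinAt)]
  · apply MeasureTheory.setIntegral_congr_fun measurableSet_Ioo
    rintro t ⟨h0, h1⟩
    have hc : 0 < Real.cos t := Real.cos_pos_of_mem_Ioo ⟨by linarith, h1⟩
    have hu := abs_le.mp (aux_u l (a ^ 2) t hl (by positivity))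
    have hp : 0 < 1 + l * a ^ 2 * (1 + Real.sin t ^ 2) / 2 := by linarith
    have e : v ^ 2 / 2 - Vquart l (a * Real.sin t) =
        (a * Real.cos t) ^ 2 * (1 + l * a ^ 2 * (1 + Real.sin t ^ 2) / 2) / 2 := by
      unfold Vquart
      rw [hva, mul_pow a (Real.cos t), Real.cos_sq']
      ring
    have hac : 0 < a * Real.cos t := by positivity
    simp only [smul_eq_mul]
    rw [e, Real.sqrt_div (by positivity), Real.sqrt_mul (by positivity),
      Real.sqrt_sq hac.le, abs_of_pos hac]
    have := Real.sqrt_pos.mpr hp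
    field_simp
  · intro x hx y hy h
    have h' : Real.sin x = Real.sin y := mul_left_cancel₀ ha.ne' h
    exact Real.injOn_sin ⟨by linarith [hx.1, Real.pi_pos], hx.2.le⟩
      ⟨by linarith [hy.1, Real.pi_pos], hy.2.le⟩ h'

lemma aux_est (l A : ℝ) (hl : l = 1 ∨ l = -1) (hA : 0 < A) (hA2 : A ≤ 1 / 2) :
    |(∫ t in (0 : ℝ)..(π / 2), (Real.sqrt (1 + l * A * (1 + Real.sin t ^ 2) / 2))⁻¹)
      - (π / 2 - l * A * (3 * π / 16))| ≤ A ^ 2 * (π / 2) := by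
  have hpi : 0 ≤ π / 2 := by positivity
  have e : ∫ t in (0 : ℝ)..(π / 2), (1 - l * A * (1 + Real.sin t ^ 2) / 2 / 2)
      = π / 2 - l * A * (3 * π / 16) := by
    have : ∀ t : ℝ, 1 - l * A * (1 + Real.sin t ^ 2) / 2 / 2
        = (1 - l * A / 4) - (l * A / 4) * Real.sin t ^ 2 := fun t => by ring
    simp_rw [this]
    rw [intervalIntegral.integral_sub (by simp)
      ((by fun_prop : Continuous fun t : ℝ => (l * A / 4) * Real.sin t ^ 2).intervalIntegrable _ _),
      intervalIntegral.integral_const_mul, integral_sin_sq]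
    simp
    ring
  have hc : Continuous fun t : ℝ => (Real.sqrt (1 + l * A * (1 + Real.sin t ^ 2) / 2))⁻¹ := by
    apply Continuous.inv₀ (by fun_prop)
    intro t
    have hu := abs_le.mp (aux_u l A t hl hA)
    exact (Real.sqrt_pos.mpr (by linarith)).ne'
  rw [← e, ← intervalIntegral.integral_sub (hc.intervalIntegrable _ _)
    (Continuous.intervalIntegrable (by fun_prop) _ _)]
  have := intervalIntegral.norm_integral_le_of_norm_le_const (a := 0) (b := π / 2) (C := A ^ 2)
    (f := fun t => (Real.sqrt (1 + l * A * (1 + Real.sin t ^ 2) / 2))⁻¹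
      - (1 - l * A * (1 + Real.sin t ^ 2) / 2 / 2)) (by
      intro t _
      have hu := aux_u l A t hl hA
      refine (aux_taylor _ (hu.trans hA2)).trans ?_
      rw [← sq_abs]
      gcongr)
  rwa [sub_zero, abs_of_nonneg hpi] at this

/-- `|T_ℓ(v) - 2π + (3π/4)ℓv²| ≤ Cv⁴` for all small `v`. -/
theorem statement14 (l : ℝ) (hl : l = 1 ∨ l = -1) :
    ∃ v₀ > (0 : ℝ), ∃ C > (0 : ℝ), ∀ v : ℝ, |v| < v₀ →
      |periodQuart l v - 2 * Real.pi + 3 * Real.pi / 4 * l * v ^ 2| ≤ C * v ^ 4 := by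
  refine ⟨1 / 2, by norm_num, 10 * π, by positivity, fun v hv => ?_⟩
  by_cases hv0 : v = 0
  · simp [periodQuart, hv0]
  obtain ⟨ha, hva, h2, h3⟩ := aux_xMax l v hl hv hv0
  have hest := aux_est l (xMax l v ^ 2) hl (by positivity) h3
  have hcov := aux_cov l v _ hl ha h3 hva
  unfold periodQuart
  rw [if_neg hv0, hcov]
  set J := ∫ t in (0 : ℝ)..(π / 2),
        (Real.sqrt (1 + l * xMax l v ^ 2 * (1 + Real.sin t ^ 2) / 2))⁻¹
  have hA : 0 < xMax l v ^ 2 := by positivity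
  set A := xMax l v ^ 2
  have h22 : Real.sqrt 2 * Real.sqrt 2 = 2 := Real.mul_self_sqrt (by norm_num)
  have hll : l * l = 1 := by rcases hl with rfl | rfl <;> norm_num
  have e : 2 * Real.sqrt 2 * (Real.sqrt 2 * J) - 2 * π + 3 * π / 4 * l * v ^ 2
      = 4 * (J - (π / 2 - l * A * (3 * π / 16))) + 3 * π / 8 * A ^ 2 := by
    rw [hva]
    linear_combination 2 * J * h22 + 3 * π / 8 * A ^ 2 * hll
  have hA4 : A ^ 2 ≤ 4 * v ^ 4 := by
    calc A ^ 2 ≤ (2 * v ^ 2) ^ 2 := by gcongr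
      _ = _ := by ring
  have hpA : π * A ^ 2 ≤ π * (4 * v ^ 4) := by gcongr
  have hpA0 : 0 ≤ π * A ^ 2 := by positivity
  rw [e]
  have h := abs_le.mp hest
  rw [abs_le]
  constructor <;> nlinarith
end

section
/- Let V be a C⁵ perturbed quartic potential with ℓ ∈ {−1,1} equal to the sign of V⁽⁴⁾(0), and let T(v) be its period map. Then there exist v₀ > 0 and C > 0 such that for all 0 < |v| < v₀: |T(v) − 2π + (3π/4)ℓv²| ≤ C|v|³. -/
open Real Filter Asymptotics Topology

set_option maxHeartbeats 2000000 in
open MeasureTheory in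
lemma key_ineq (l K x w w' g : ℝ) (hl : l = 1 ∨ l = -1) (hK : 1 ≤ K) (hx : 0 < x)
    (hKx : K * x ≤ 1 / 8)
    (he : |w - (x ^ 2 / 2 + l * x ^ 4 / 4)| ≤ K * x ^ 5)
    (hd : |w' - (x + l * x ^ 3)| ≤ K * x ^ 4) (hg0 : 0 ≤ g) (hg : g ^ 2 = 2 * w) :
    x / 2 ≤ w' ∧ x / 2 ≤ g ∧ 0 < w ∧ |g - w' * (1 - 3 / 2 * l * w)| ≤ 10 * K * x ^ 4 := by
  have hx8 : x ≤ 1 / 8 := by nlinarith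
  have h2 : 0 < x ^ 2 := by positivity
  have hx2 : x ^ 2 ≤ 1 / 64 := by nlinarith
  have h3 : x ^ 3 ≤ x / 64 := by nlinarith
  have h4 : x ^ 4 ≤ x ^ 2 / 64 := by
    have hq2 : x ^ 2 ≤ 1 / 64 := by nlinarith
    nlinarith
  have h4' : x ^ 4 ≤ x / 512 := by nlinarith
  have h6 : x ^ 6 ≤ x ^ 5 / 8 := by
    have : 0 < x ^ 5 := by positivity
    nlinarith
  have h4p : 0 < x ^ 4 := by positivity
  have hK4 : K * x ^ 4 ≤ x ^ 3 / 8 := by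
    have : 0 < x ^ 3 := by positivity
    nlinarith
  have hK5 : K * x ^ 5 ≤ x ^ 4 / 8 := by nlinarith
  have h3p : 0 < x ^ 3 := by positivity
  have h5p : 0 < x ^ 5 := by positivity
  have h54 : x ^ 5 ≤ x ^ 4 / 8 := by nlinarith
  have he' := abs_le.1 he
  have hd' := abs_le.1 hd
  have hl2 : l ^ 2 = 1 := by rcases hl with h | h <;> rw [h] <;> norm_num
  have hlabs : |l| = 1 := by rcases hl with h | h <;> rw [h] <;> norm_num
  have hw' : x / 2 ≤ w' := by rcases hl with h | h <;> subst h <;> linarith [hd'.1]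
  have hwl : x ^ 2 / 4 ≤ w := by rcases hl with h | h <;> subst h <;> linarith [he'.1]
  have hwu : w ≤ x ^ 2 := by rcases hl with h | h <;> subst h <;> linarith [he'.2]
  have hgx : x / 2 ≤ g := by
    refine abs_le_of_sq_le_sq' (?_ : (x / 2) ^ 2 ≤ g ^ 2) hg0 |>.2
    nlinarith
  refine ⟨hw', hgx, by linarith, ?_⟩
  set q := x + l * x ^ 3 / 4 with hq
  have hqx : x / 2 ≤ q := by rcases hl with h | h <;> subst h <;> linarith
  have hgq : |g - q| ≤ 3 * K * x ^ 4 := by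
    have h1 : |g - q| * (g + q) ≤ 2 * (K * x ^ 5) + x ^ 6 / 16 := by
      have hs : 0 < g + q := by linarith
      rw [← abs_of_pos hs, ← abs_mul]
      have : (g - q) * (g + q) = 2 * (w - (x ^ 2 / 2 + l * x ^ 4 / 4)) - x ^ 6 / 16 := by
        have : q ^ 2 = x ^ 2 + l * x ^ 4 / 2 + x ^ 6 / 16 := by
          rw [hq]; linear_combination (x ^ 6 / 16) * hl2
        linear_combination hg - this
      rw [this, abs_le]
      have : 0 < x ^ 6 := by positivity
      constructor <;> linarith [he'.1, he'.2]
    have h2 : |g - q| * x ≤ (3 * K * x ^ 4) * x := by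
      have := mul_le_mul_of_nonneg_left (show x ≤ g + q by linarith) (abs_nonneg (g - q))
      nlinarith
    exact le_of_mul_le_mul_right h2 hx
  set d := w' - (x + l * x ^ 3) with hdd
  set e := w - (x ^ 2 / 2 + l * x ^ 4 / 4) with hee
  have hid : g - w' * (1 - 3 / 2 * l * w) = (g - q) - d * (1 - 3 / 2 * l * w)
      + (3 / 2 * x * (l * e) + 3 / 2 * x ^ 3 * e) + (9 / 8 * x ^ 5 + 3 / 8 * l * x ^ 7) := by
    have e1 : w' = d + (x + l * x ^ 3) := by rw [hdd]; ring
    have e2 : w = e + (x ^ 2 / 2 + l * x ^ 4 / 4) := by rw [hee]; ring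
    rw [e1, e2, hq]
    linear_combination (3 / 2 * x ^ 3 * e + 9 / 8 * x ^ 5 + 3 / 8 * l * x ^ 7) * hl2
  have b1 : |d * (1 - 3 / 2 * l * w)| ≤ 2 * K * x ^ 4 := by
    rw [abs_mul]
    have : |1 - 3 / 2 * l * w| ≤ 2 := by
      rw [abs_le]; rcases hl with h | h <;> subst h <;> constructor <;> linarith
    calc |d| * |1 - 3 / 2 * l * w| ≤ (K * x ^ 4) * 2 := by gcongr
      _ = _ := by ring
  have b2 : |3 / 2 * x * (l * e)| ≤ K * x ^ 4 := by
    rw [abs_mul, abs_mul l, hlabs, abs_of_pos (by positivity : (0:ℝ) < 3 / 2 * x)]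
    calc 3 / 2 * x * (1 * |e|) ≤ 3 / 2 * x * (1 * (K * x ^ 5)) := by gcongr
      _ = (K * x ^ 4) * (3 / 2 * x ^ 2) := by ring
      _ ≤ (K * x ^ 4) * 1 := by gcongr; linarith
      _ = _ := by ring
  have b3 : |3 / 2 * x ^ 3 * e| ≤ K * x ^ 4 := by
    rw [abs_mul, abs_of_pos (by positivity : (0:ℝ) < 3 / 2 * x ^ 3)]
    calc 3 / 2 * x ^ 3 * |e| ≤ 3 / 2 * x ^ 3 * (K * x ^ 5) := by gcongr
      _ = (K * x ^ 4) * (3 / 2 * x ^ 4) := by ring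
      _ ≤ (K * x ^ 4) * 1 := by gcongr; linarith
      _ = _ := by ring
  have b4 : |9 / 8 * x ^ 5 + 3 / 8 * l * x ^ 7| ≤ K * x ^ 4 := by
    have h7 : x ^ 7 ≤ x ^ 5 := pow_le_pow_of_le_one hx.le (by linarith) (by norm_num)
    have hk4 : x ^ 4 ≤ K * x ^ 4 := le_mul_of_one_le_left h4p.le hK
    have h7p : 0 < x ^ 7 := by positivity
    rw [abs_le]
    rcases hl with h | h <;> subst h <;> constructor <;> linarith
  rw [hid]
  have c0 := abs_le.1 hgq
  have c1 := abs_le.1 b1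
  have c2 := abs_le.1 b2
  have c3 := abs_le.1 b3
  have c4 := abs_le.1 b4
  have hkp : 0 < K * x ^ 4 := by positivity
  rw [abs_le]
  constructor <;> linarith [c0.1, c0.2, c1.1, c1.2, c2.1, c2.2, c3.1, c3.2, c4.1, c4.2]

set_option maxHeartbeats 2000000 in
open MeasureTheory in
lemma half_period (W W' : ℝ → ℝ) (l K δ : ℝ) (hl : l = 1 ∨ l = -1) (hK : 1 ≤ K)
    (hKδ : K * δ ≤ 1 / 8) (hW : ∀ x, HasDerivAt W (W' x) x)
    (he : ∀ x, 0 ≤ x → x ≤ δ → |W x - (x ^ 2 / 2 + l * x ^ 4 / 4)| ≤ K * x ^ 5)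
    (hd : ∀ x, 0 ≤ x → x ≤ δ → |W' x - (x + l * x ^ 3)| ≤ K * x ^ 4)
    (a b : ℝ) (ha : 0 < a) (hb : 0 < b) (hbδ : b ≤ δ) (hWb : W b = a ^ 2 / 2) :
    IntervalIntegrable (fun x => (√(a ^ 2 / 2 - W x))⁻¹) volume 0 b ∧
    |√2 * (∫ x in (0:ℝ)..b, (√(a ^ 2 / 2 - W x))⁻¹) - (π - 3 * π / 8 * l * a ^ 2)|
      ≤ 160 * π * K * a ^ 3 := by
  have hWc : Continuous W := continuous_iff_continuousAt.2 fun x => (hW x).continuousAt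
  have hW0 : W 0 = 0 := by
    have := he 0 le_rfl (hb.le.trans hbδ)
    simpa using this
  have key : ∀ x, 0 < x → x ≤ b → x / 2 ≤ W' x ∧ x / 2 ≤ √(2 * W x) ∧ 0 < W x ∧
      |√(2 * W x) - W' x * (1 - 3 / 2 * l * W x)| ≤ 10 * K * x ^ 4 := by
    intro x hx hxb
    have hpos : 0 ≤ 2 * W x := by
      have h1 := abs_le.1 (he x hx.le (hxb.trans hbδ))
      have hKx : K * x ≤ 1 / 8 := by nlinarith
      have hx8 : x ≤ 1 / 8 := by nlinarith
      have h2 : 0 < x ^ 2 := by positivity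
      have h4 : x ^ 4 ≤ x ^ 2 / 64 := by
        have hq2 : x ^ 2 ≤ 1 / 64 := by nlinarith
        nlinarith
      have h4p : 0 < x ^ 4 := by positivity
      have : K * x ^ 5 ≤ x ^ 4 / 8 := by nlinarith
      rcases hl with h | h <;> subst h <;> linarith [h1.1]
    exact key_ineq l K x (W x) (W' x) _ hl hK hx (by nlinarith) (he x hx.le (hxb.trans hbδ))
      (hd x hx.le (hxb.trans hbδ)) (Real.sqrt_nonneg _) (Real.sq_sqrt hpos)
  have hmono : StrictMonoOn W (Set.Icc 0 b) := by
    apply strictMonoOn_of_deriv_pos (convex_Icc 0 b) hWc.continuousOn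
    intro x hx
    rw [interior_Icc] at hx
    rw [(hW x).deriv]
    linarith [(key x hx.1 hx.2.le).1, hx.1]
  have hlt : ∀ x, 0 < x → x < b → W x < a ^ 2 / 2 := by
    intro x hx hxb
    rw [← hWb]
    exact hmono ⟨hx.le, hxb.le⟩ ⟨hb.le, le_rfl⟩ hxb
  set φ : ℝ → ℝ := fun x => (√(a ^ 2 / 2 - W x))⁻¹ with hφ
  set p : ℝ → ℝ := fun x => W' x * φ x / √(2 * W x) with hp
  have s2 : (0:ℝ) < √2 := by positivity
  have s22 : √2 * √2 = (2:ℝ) := Real.mul_self_sqrt (by norm_num)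
  have hφ0 : ∀ x, 0 ≤ φ x := fun x => inv_nonneg.2 (Real.sqrt_nonneg _)
  set A : ℝ → ℝ := fun x => arcsin (√(2 * W x) / a) with hA
  set B : ℝ → ℝ := fun x => √(2 * W x) * √(a ^ 2 - 2 * W x) with hB
  have hAc : Continuous A := by
    apply Real.continuous_arcsin.comp; fun_prop
  have hBc : Continuous B := by fun_prop
  have hg' : ∀ x, 0 < x → x < b → HasDerivAt (fun x => √(2 * W x)) (W' x / √(2 * W x)) x := by
    intro x hx hxb
    have h := ((hW x).const_mul 2).sqrt (by linarith [(key x hx hxb.le).2.2.1])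
    convert h using 1
    rw [mul_div_mul_left _ _ (two_ne_zero)]
  have hAd : ∀ x, 0 < x → x < b → HasDerivAt A (p x / √2) x := by
    intro x hx hxb
    have hg := hg' x hx hxb
    have hWp := (key x hx hxb.le).2.2.1
    have hl := hlt x hx hxb
    have hu0 : 0 < √(2 * W x) / a := by positivity
    have hu1 : √(2 * W x) / a < 1 := by
      rw [div_lt_one ha, Real.sqrt_lt' ha]; linarith
    have h := (Real.hasDerivAt_arcsin (x := √(2 * W x) / a) (by linarith) hu1.ne).comp x
      (hg.div_const a)
    refine HasDerivAt.congr_deriv (f := A) h ?_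
    have : √(1 - (√(2 * W x) / a) ^ 2) = √2 * √(a ^ 2 / 2 - W x) / a := by
      rw [div_pow, Real.sq_sqrt (by linarith), ← Real.sqrt_mul (by norm_num)]
      rw [show 1 - 2 * W x / a ^ 2 = (2 * (a ^ 2 / 2 - W x)) / a ^ 2 by field_simp]
      rw [Real.sqrt_div' _ (by positivity), Real.sqrt_sq ha.le]
    rw [this]
    have h1 : 0 < √(a ^ 2 / 2 - W x) := Real.sqrt_pos.2 (by linarith)
    have h2 : 0 < √(2 * W x) := Real.sqrt_pos.2 (by linarith)
    simp only [hp, hφ]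
    field_simp
  have hBd : ∀ x, 0 < x → x < b → HasDerivAt B (p x / √2 * (a ^ 2 - 4 * W x)) x := by
    intro x hx hxb
    have hg := hg' x hx hxb
    have hWp := (key x hx hxb.le).2.2.1
    have hl := hlt x hx hxb
    have h := hg.mul ((((hW x).const_mul 2).const_sub (a ^ 2)).sqrt
      (by linarith : a ^ 2 - 2 * W x ≠ 0))
    refine HasDerivAt.congr_deriv (f := B) h ?_
    have h1 : 0 < √(a ^ 2 / 2 - W x) := Real.sqrt_pos.2 (by linarith)
    have h2 : 0 < √(2 * W x) := Real.sqrt_pos.2 (by linarith)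
    have h3 : √(a ^ 2 - 2 * W x) = √2 * √(a ^ 2 / 2 - W x) := by
      rw [← Real.sqrt_mul (by norm_num)]; congr 1; ring
    have h4 : √(2 * W x) ^ 2 = 2 * W x := Real.sq_sqrt (by linarith)
    have h5 : √(a ^ 2 / 2 - W x) ^ 2 = a ^ 2 / 2 - W x := Real.sq_sqrt (by linarith)
    rw [h3]
    simp only [hp, hφ]
    generalize √(a ^ 2 / 2 - W x) = r at *
    generalize √(2 * W x) = g at *
    field_simp
    have s22' : √2 ^ 2 = (2:ℝ) := by rw [sq, s22]
    simp only [s22', h4, h5]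
    ring
  have hpn : ∀ x, 0 < x → x ≤ b → 0 ≤ p x := fun x hx hxb =>
    div_nonneg (mul_nonneg (by linarith [(key x hx hxb).1]) (hφ0 x)) (Real.sqrt_nonneg _)
  have hpi' : IntervalIntegrable (fun x => p x / √2) volume 0 b := by
    apply intervalIntegral.intervalIntegrable_deriv_of_nonneg (g := A) hAc.continuousOn
    · intro x hx
      rw [min_eq_left hb.le, max_eq_right hb.le] at hx
      exact hAd x hx.1 hx.2
    · intro x hx
      rw [min_eq_left hb.le, max_eq_right hb.le] at hx
      exact div_nonneg (hpn x hx.1 hx.2.le) s2.le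
  have hpi : IntervalIntegrable p volume 0 b := by
    have := hpi'.const_mul √2
    refine this.congr ?_
    intro x _
    simp only
    field_simp
  have hA0 : A 0 = 0 := by simp [hA, hW0]
  have hAb : A b = π / 2 := by
    simp only [hA, hWb]
    rw [show 2 * (a ^ 2 / 2) = a ^ 2 by ring, Real.sqrt_sq ha.le, div_self ha.ne', arcsin_one]
  have hB0 : B 0 = 0 := by simp [hB, hW0]
  have hBb : B b = 0 := by
    simp only [hB, hWb]
    rw [show a ^ 2 - 2 * (a ^ 2 / 2) = 0 by ring]; simp
  have hpint : ∫ x in (0:ℝ)..b, p x / √2 = π / 2 := by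
    rw [intervalIntegral.integral_eq_sub_of_hasDerivAt_of_le hb.le hAc.continuousOn
      (fun x hx => hAd x hx.1 hx.2) hpi', hA0, hAb, sub_zero]
  -- integrability of φ
  have hφi : IntervalIntegrable φ volume 0 b := by
    refine (hpi.const_mul 4).mono_fun ?_ ?_
    · have : Measurable φ := by
        simp only [hφ]; exact (hWc.measurable.const_sub _).sqrt.inv
      exact this.aestronglyMeasurable
    · rw [Set.uIoc_of_le hb.le]
      refine (ae_restrict_iff' measurableSet_Ioc).2 (Eventually.of_forall fun x hx => ?_)
      obtain ⟨k1, k2, k3, _⟩ := key x hx.1 hx.2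
      show ‖φ x‖ ≤ ‖4 * p x‖
      rw [Real.norm_of_nonneg (hφ0 x), Real.norm_of_nonneg (by linarith [hpn x hx.1 hx.2])]
      have h2 : 0 < √(2 * W x) := Real.sqrt_pos.2 (by linarith)
      have : √(2 * W x) ≤ 4 * W' x := by
        have hxl := hx.1
        have h1 := abs_le.1 (he x hx.1.le (hx.2.trans hbδ))
        have hKx : K * x ≤ 1 / 8 := by nlinarith [hx.2]
        have hx8 : x ≤ 1 / 8 := by nlinarith
        have h2 : 0 < x ^ 2 := by positivity
        have h4 : x ^ 4 ≤ x ^ 2 / 64 := by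
          have hq2 : x ^ 2 ≤ 1 / 64 := by nlinarith
          nlinarith
        have h4p : 0 < x ^ 4 := by positivity
        have : K * x ^ 5 ≤ x ^ 4 / 8 := by nlinarith
        have : W x ≤ x ^ 2 := by rcases hl with h | h <;> subst h <;> linarith [h1.2]
        have : √(2 * W x) ≤ 2 * x := by
          apply Real.sqrt_le_iff.2 ⟨by linarith, by nlinarith⟩
        linarith
      simp only [hp]
      rw [← mul_div_assoc, le_div_iff₀ h2]
      nlinarith [hφ0 x]
  refine ⟨hφi, ?_⟩
  -- main part
  have hWi : IntervalIntegrable (fun x => p x / √2 * (1 - 3 / 2 * l * W x)) volume 0 b :=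
    hpi'.mul_continuousOn (by fun_prop)
  have hmain : ∫ x in (0:ℝ)..b, p x / √2 * (1 - 3 / 2 * l * W x)
      = π / 2 - 3 * l / 8 * (a ^ 2 * (π / 2)) := by
    have := intervalIntegral.integral_eq_sub_of_hasDerivAt_of_le hb.le
      (f := fun x => A x - 3 * l / 8 * (a ^ 2 * A x - B x))
      (f' := fun x => p x / √2 * (1 - 3 / 2 * l * W x)) (by fun_prop)
      (fun x hx => by
        have h := (hAd x hx.1 hx.2).sub ((((hAd x hx.1 hx.2).const_mul (a ^ 2)).sub
          (hBd x hx.1 hx.2)).const_mul (3 * l / 8))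
        refine HasDerivAt.congr_deriv (f := fun x => A x - 3 * l / 8 * (a ^ 2 * A x - B x)) h ?_
        ring) hWi
    rw [this]
    simp only [hA0, hAb, hB0, hBb]
    ring
  have hdiff : √2 * (∫ x in (0:ℝ)..b, φ x) - (π - 3 * π / 8 * l * a ^ 2)
      = ∫ x in (0:ℝ)..b, (√2 * φ x - 2 * (p x / √2 * (1 - 3 / 2 * l * W x))) := by
    rw [intervalIntegral.integral_sub (hφi.const_mul _) (hWi.const_mul _),
      intervalIntegral.integral_const_mul, intervalIntegral.integral_const_mul, hmain]
    ring
  rw [hdiff, ← Real.norm_eq_abs]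
  have hfin : ∫ x in (0:ℝ)..b, 320 * K * a ^ 3 * (p x / √2) = 160 * π * K * a ^ 3 := by
    rw [intervalIntegral.integral_const_mul, hpint]; ring
  rw [← hfin]
  refine intervalIntegral.norm_integral_le_of_norm_le hb.le
    (Eventually.of_forall fun x hx => ?_) (hpi'.const_mul _)
  obtain ⟨k1, k2, k3, k4⟩ := key x hx.1 hx.2
  have h2 : 0 < √(2 * W x) := Real.sqrt_pos.2 (by linarith)
  have hx0 := hx.1
  have hga : √(2 * W x) ≤ a := by
    rw [Real.sqrt_le_left ha.le]
    have := hmono.monotoneOn ⟨hx0.le, hx.2⟩ ⟨hb.le, le_rfl⟩ hx.2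
    rw [hWb] at this
    linarith
  have hxa : x ≤ 2 * a := by linarith
  have hs : ∀ t : ℝ, t / √2 = √2 * t / 2 := by
    intro t
    field_simp
    linear_combination -t * s22
  have e1 : √2 * φ x - 2 * (p x / √2 * (1 - 3 / 2 * l * W x))
      = √2 * φ x / √(2 * W x) * (√(2 * W x) - W' x * (1 - 3 / 2 * l * W x)) := by
    simp only [hp]
    rw [hs]
    generalize √(2 * W x) = g at *
    generalize φ x = y at *
    field_simp
  have e2 : 320 * K * a ^ 3 * (p x / √2) = √2 * φ x / √(2 * W x) * (160 * K * a ^ 3 * W' x) := by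
    simp only [hp]
    rw [hs]
    ring
  have hc : 0 ≤ √2 * φ x / √(2 * W x) := div_nonneg (mul_nonneg s2.le (hφ0 x)) h2.le
  rw [Real.norm_eq_abs, e1, e2, abs_mul, abs_of_nonneg hc]
  apply mul_le_mul_of_nonneg_left _ hc
  refine k4.trans ?_
  have hx3 : x ^ 3 ≤ (2 * a) ^ 3 := pow_le_pow_left₀ hx0.le hxa 3
  calc 10 * K * x ^ 4 = 20 * K * (x ^ 3 * (x / 2)) := by ring
    _ ≤ 20 * K * ((2 * a) ^ 3 * W' x) := by gcongr
    _ = _ := by ring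

/-- the period map of a perturbed quartic potential satisfies
`|T(v) - 2π + (3π/4)ℓv²| ≤ C|v|³` for all small `v ≠ 0`. -/
theorem statement15 (V f : ℝ → ℝ) (l : ℝ) (hV : PerturbedQuartic V f l)
    (v₁ : ℝ) (hv₁ : 0 < v₁)
    -- the extreme points `x^m(v) ≤ 0 ≤ x^M(v)`, determined near 0 by
    -- `V(x^m(v)) = V(x^M(v)) = v²/2`:
    (xm xM : ℝ → ℝ)
    (hext : ∀ v : ℝ, 0 < |v| → |v| < v₁ → xm v ≤ 0 ∧ 0 ≤ xM v ∧
      V (xm v) = v ^ 2 / 2 ∧ V (xM v) = v ^ 2 / 2)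
    (hnear_m : Filter.Tendsto xm (𝓝 0) (𝓝 0))
    (hnear_M : Filter.Tendsto xM (𝓝 0) (𝓝 0))
    -- the period map `T(v) = √2 ∫_{x^m(v)}^{x^M(v)} (v²/2 - V(x))^{-1/2} dx`, `T(0) = 2π`:
    (T : ℝ → ℝ) (hT0 : T 0 = 2 * Real.pi)
    (hT : ∀ v : ℝ, 0 < |v| → |v| < v₁ →
      T v = Real.sqrt 2 * ∫ x in (xm v)..(xM v), (Real.sqrt (v ^ 2 / 2 - V x))⁻¹) :
    ∃ v₀ > (0 : ℝ), ∃ C > (0 : ℝ), ∀ v : ℝ, 0 < |v| → |v| < v₀ →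
      |T v - 2 * Real.pi + 3 * Real.pi / 4 * l * v ^ 2| ≤ C * |v| ^ 3 := by
  obtain ⟨hl, hf, hVf, hO⟩ := hV
  have hfd : ∀ x, HasDerivAt f (deriv f x) x := fun x =>
    (hf.differentiable (by norm_num) x).hasDerivAt
  have h0 := hO 0 (by norm_num)
  have h1 := hO 1 (by norm_num)
  rw [iteratedDeriv_zero] at h0
  rw [iteratedDeriv_one] at h1
  obtain ⟨c0, hc0⟩ := h0.bound
  obtain ⟨c1, hc1⟩ := h1.bound
  obtain ⟨r, hr, hball⟩ := Metric.eventually_nhds_iff.1 (hc0.and hc1)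
  set K := max 1 (max c0 c1) with hKdef
  have hK : 1 ≤ K := le_max_left _ _
  have hc0K : c0 ≤ K := (le_max_left _ _).trans (le_max_right _ _)
  have hc1K : c1 ≤ K := (le_max_right _ _).trans (le_max_right _ _)
  have hKpos : 0 < K := by linarith
  set δ := min (r / 2) (1 / (8 * K)) with hδdef
  have hδ : 0 < δ := by positivity
  have hδr : δ < r := by have := min_le_left (r / 2) (1 / (8 * K)); linarith
  have hKδ : K * δ ≤ 1 / 8 := by
    have h : δ ≤ 1 / (8 * K) := min_le_right _ _
    calc K * δ ≤ K * (1 / (8 * K)) := by gcongr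
      _ = 1 / 8 := by field_simp
  have bf : ∀ x, |x| ≤ δ → |f x| ≤ K * |x| ^ 5 ∧ |deriv f x| ≤ K * |x| ^ 4 := by
    intro x hx
    have := hball (y := x) (by rw [Real.dist_eq, sub_zero]; linarith)
    simp only [Real.norm_eq_abs, abs_pow, abs_abs] at this
    refine ⟨this.1.trans ?_, this.2.trans ?_⟩
    · exact mul_le_mul_of_nonneg_right hc0K (by positivity)
    · exact mul_le_mul_of_nonneg_right hc1K (by positivity)
  have hVd : ∀ x, HasDerivAt V (x + l * x ^ 3 + deriv f x) x := by
    intro x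
    have h : HasDerivAt (fun x : ℝ => x ^ 2 / 2 + l * x ^ 4 / 4 + f x)
        (x + l * x ^ 3 + deriv f x) x := by
      have := ((((hasDerivAt_id x).pow 2).div_const 2).add
        ((((hasDerivAt_id x).pow 4).const_mul l).div_const 4)).add (hfd x)
      refine HasDerivAt.congr_deriv (f := fun x : ℝ => x ^ 2 / 2 + l * x ^ 4 / 4 + f x) this ?_
      simp only [id]
      push_cast
      ring
    have e : V = fun x : ℝ => x ^ 2 / 2 + l * x ^ 4 / 4 + f x := funext hVf
    rw [e]; exact h
  have hV0 : V 0 = 0 := by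
    have := (bf 0 (by simpa using hδ.le)).1
    rw [hVf]; simpa using this
  have hev : ∀ᶠ v in 𝓝 (0:ℝ), |xm v| < δ ∧ |xM v| < δ := by
    have e1 := hnear_m.eventually (Metric.ball_mem_nhds (0:ℝ) hδ)
    have e2 := hnear_M.eventually (Metric.ball_mem_nhds (0:ℝ) hδ)
    filter_upwards [e1, e2] with v a b
    simp only [Real.dist_eq, sub_zero] at a b
    exact ⟨a, b⟩
  obtain ⟨v₂, hv₂, hb2⟩ := Metric.eventually_nhds_iff.1 hev
  refine ⟨min v₁ v₂, lt_min hv₁ hv₂, 320 * π * K, by positivity, ?_⟩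
  intro v hv hvlt
  have hvl1 : |v| < v₁ := hvlt.trans_le (min_le_left _ _)
  have hvl2 : |v| < v₂ := hvlt.trans_le (min_le_right _ _)
  obtain ⟨hm0, hM0, hVm, hVM⟩ := hext v hv hvl1
  obtain ⟨hmδ, hMδ⟩ := hb2 (y := v) (by rwa [Real.dist_eq, sub_zero])
  have hv2 : 0 < v ^ 2 := by rw [← sq_abs]; positivity
  have hMpos : 0 < xM v := lt_of_le_of_ne hM0 (by
    intro h; rw [← h, hV0] at hVM; linarith)
  have hmneg : 0 < -xm v := by
    have : xm v ≠ 0 := by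
      intro h; rw [h, hV0] at hVm; linarith
    have := lt_of_le_of_ne hm0 this
    linarith
  rw [abs_of_pos hMpos] at hMδ
  rw [abs_of_neg (by linarith)] at hmδ
  obtain ⟨iM, bM⟩ := half_period V (fun x => x + l * x ^ 3 + deriv f x) l K δ hl hK hKδ hVd
    (fun x hx hxd => by
      have := (bf x (by rwa [abs_of_nonneg hx])).1
      rw [abs_of_nonneg hx] at this
      rw [hVf]; simpa using this)
    (fun x hx hxd => by
      have := (bf x (by rwa [abs_of_nonneg hx])).2
      rw [abs_of_nonneg hx] at this
      simpa using this)
    |v| (xM v) hv hMpos hMδ.le (by rw [sq_abs, hVM])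
  obtain ⟨im, bm⟩ := half_period (fun x => V (-x)) (fun x => x + l * x ^ 3 - deriv f (-x))
    l K δ hl hK hKδ
    (fun x => by
      have := (hVd (-x)).comp x (hasDerivAt_neg x)
      refine HasDerivAt.congr_deriv (f := fun x => V (-x)) this ?_
      ring)
    (fun x hx hxd => by
      have := (bf (-x) (by rwa [abs_neg, abs_of_nonneg hx])).1
      rw [abs_neg, abs_of_nonneg hx] at this
      simp only [hVf]
      convert this using 2
      ring)
    (fun x hx hxd => by
      have := (bf (-x) (by rwa [abs_neg, abs_of_nonneg hx])).2
      rw [abs_neg, abs_of_nonneg hx] at this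
      rw [← abs_neg]
      convert this using 2
      ring)
    |v| (-xm v) hv hmneg hmδ.le (by simp only [neg_neg]; rw [sq_abs, hVm])
  rw [sq_abs] at iM bM im bm
  have im' : IntervalIntegrable (fun x => (√(v ^ 2 / 2 - V x))⁻¹) MeasureTheory.volume (xm v) 0 := by
    have := (IntervalIntegrable.iff_comp_neg (f := fun x => (√(v ^ 2 / 2 - V (-x)))⁻¹)).1 im
    simpa using this.symm
  have em : ∫ x in (0:ℝ)..(-xm v), (√(v ^ 2 / 2 - V (-x)))⁻¹
      = ∫ x in (xm v)..0, (√(v ^ 2 / 2 - V x))⁻¹ := by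
    rw [intervalIntegral.integral_comp_neg (fun x => (√(v ^ 2 / 2 - V x))⁻¹)]
    simp
  rw [em] at bm
  rw [hT v hv hvl1, ← intervalIntegral.integral_add_adjacent_intervals im' iM]
  rw [abs_le] at *
  constructor <;> linarith [bM.1, bM.2, bm.1, bm.2]
end
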